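/- arXiv:1004.5338 — 6 statements merged into one kernel-verified Lean document; each statement's English description precedes it below -/
import Mathlib

section
/- Let T > 0, let g : [0,T] → ℝ be right-continuous with ∫_0^T min(g(s),1) n(s) ds < ∞, let n : [0,T] → [0,∞) be continuous and bounded, and let F₀ : ℝ → [0,1] be the cumulative distribution function of a random variable X₀. Define F(x,t) = e^{−Λ(t)} · Σ_{m=0}^∞ (1/m!) ∫_{(0,t)^m} F₀(x − g(s₁) − ⋯ − g(s_m)) n(s₁)⋯n(s_m) ds₁⋯ds_m, where Λ(t) = ∫_0^t n(s) ds. Then for every t ∈ [0,T) and every x ∈ ℝ such that F(·,t) is continuous at the point x − g(t), the right time-derivative ∂F/∂t⁺(x,t) = lim_{h→0⁺} (F(x,t+h) − F(x,t))/h exists and equals −n(t)·(F(x,t) − F(x − g(t), t)). -/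
/-!
The series for `F(·,t)` is `exp(-Λ(t)) · exp(A_t) F₀`, where `A_t f(x) = ∫_0^t f(x - g(s)) n(s) ds`
acts on bounded measurable functions (`poissonCDF_eq`). On passing from `t` to `τ = t + h`, the
operator becomes `A_t + D`, where `D f(x) = ∫_t^τ f(x - g(s)) n(s) ds` has norm `O(h)` and, by Fubini,
commutes with `A_t` (`jumpOp_comm`). Hence `exp(A_t + D) F₀ = exp(A_t) F₀ + D exp(A_t) F₀ + O(h²)`;
the remainder is controlled term by term in `iterate_remainder` and summed in `series_remainder`.
The first-order term is `∫_t^τ S(x - g(s)) n(s) ds` with `S = exp(A_t) F₀`. Its right derivative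
at `τ = t` is `S(x - g(t)) n(t)` by the fundamental theorem of calculus, because `g` and `n` are
right-continuous at `t` and `S` is continuous at `x - g(t)`. The product rule with the factor
`exp(-Λ)` gives the equation.

This argument takes `g` and `n` measurable on the whole line. Both may be truncated outside `[0,T)`,
and a right-continuous function is measurable as a pointwise limit of step functions
(`measurable_indicator_of_rightCont`).
-/

open MeasureTheory

/-- The cumulative distribution function at time `t` of the process
`X(t) = X₀ + ∫_0^t g(s) N(ds)`, where `N` is a Poisson random measure with control
measure `n(s) ds` and `X₀` has CDF `F₀`, given by its compound-Poisson series
representation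
`F(x,t) = e^{−Λ(t)} Σ_{m} (1/m!) ∫_{(0,t)^m} F₀(x − Σᵢ g(sᵢ)) Πᵢ n(sᵢ) ds`. -/
noncomputable def poissonCDF (g n F₀ : ℝ → ℝ) (x t : ℝ) : ℝ :=
  Real.exp (-(∫ s in (0:ℝ)..t, n s)) *
    ∑' m : ℕ, ((m.factorial : ℝ))⁻¹ *
      ∫ s in Set.univ.pi (fun _ : Fin m => Set.Ioo (0:ℝ) t),
        F₀ (x - ∑ i, g (s i)) * ∏ i, n (s i)

open Set Filter Topology

/-! ### Measurability of right-continuous functions -/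

/-- The step functions `s ↦ g((⌊ks⌋+1)/k)`, `k ≥ 1`, are measurable and converge to `g` on `[0,T)`,
since they sample `g` at points approaching `s` strictly from the right. -/
lemma measurable_indicator_of_rightCont (T : ℝ) (g : ℝ → ℝ)
    (hg : ∀ t ∈ Ico (0:ℝ) T, ContinuousWithinAt g (Ici t) t) :
    Measurable ((Ico (0:ℝ) T).indicator g) := by
  let φ : ℕ → ℝ → ℝ := fun k s => ((⌊((k:ℝ) + 1) * s⌋ : ℝ) + 1) / ((k:ℝ) + 1)
  refine measurable_of_tendsto_metrizable (f := fun k : ℕ => (Ico (0:ℝ) T).indicator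
    (fun s => g (φ k s))) ?_ ?_
  · intro k
    refine Measurable.indicator ?_ measurableSet_Ico
    have h1 : Measurable fun s : ℝ => ⌊((k:ℝ) + 1) * s⌋ :=
      Int.measurable_floor.comp (measurable_const.mul measurable_id)
    have h2 : Measurable fun z : ℤ => g (((z : ℝ) + 1) / ((k:ℝ) + 1)) := measurable_from_top
    exact h2.comp h1
  · rw [tendsto_pi_nhds]
    intro s
    by_cases hs : s ∈ Ico (0:ℝ) T
    · simp only [indicator_of_mem hs]
      refine (hg s hs).tendsto.comp ?_
      refine tendsto_nhdsWithin_iff.2 ⟨?_, Eventually.of_forall fun k => ?_⟩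
      · have hlim : Tendsto (fun k : ℕ => s + 1 / ((k:ℝ) + 1)) atTop (𝓝 s) := by
          simpa using tendsto_const_nhds.add (tendsto_one_div_add_atTop_nhds_zero_nat (𝕜 := ℝ))
        refine tendsto_of_tendsto_of_tendsto_of_le_of_le tendsto_const_nhds hlim ?_ ?_
        · intro k
          have hk : (0:ℝ) < (k:ℝ) + 1 := by positivity
          have := Int.lt_floor_add_one (((k:ℝ) + 1) * s)
          show s ≤ _ / _
          rw [le_div_iff₀ hk]; linarith
        · intro k
          have hk : (0:ℝ) < (k:ℝ) + 1 := by positivity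
          have := Int.floor_le (((k:ℝ) + 1) * s)
          show _ / _ ≤ s + 1 / ((k:ℝ) + 1)
          rw [div_le_iff₀ hk, add_mul s, one_div, inv_mul_cancel₀ hk.ne']; linarith
      · have hk : (0:ℝ) < (k:ℝ) + 1 := by positivity
        have := Int.lt_floor_add_one (((k:ℝ) + 1) * s)
        show s ≤ _ / _
        rw [le_div_iff₀ hk]; linarith
    · simp only [indicator_of_notMem hs]
      exact tendsto_const_nhds

/-! ### The jump operators on bounded measurable functions -/

/-- The operator `f ↦ (x ↦ ∫_a^b f(x - g(s)) n(s) ds)`, the unnormalised transition operator of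
the jumps occurring during `(a, b]`. -/
noncomputable def jumpOp (g n : ℝ → ℝ) (a b : ℝ) (f : ℝ → ℝ) (x : ℝ) : ℝ :=
  ∫ s in a..b, f (x - g s) * n s

section Operators

variable {g n : ℝ → ℝ} {B : ℝ}

lemma intervalIntegrable_of_bdd {f : ℝ → ℝ} {C : ℝ} (hf : Measurable f) (hC : ∀ s, |f s| ≤ C)
    (a b : ℝ) : IntervalIntegrable f volume a b := by
  rw [intervalIntegrable_iff]
  exact Measure.integrableOn_of_bounded (M := C) (by simp) hf.aestronglyMeasurable
    (Eventually.of_forall hC)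

lemma abs_mul_weight_le (hn : ∀ s, |n s| ≤ B) {f : ℝ → ℝ} {C : ℝ} (hC : ∀ x, |f x| ≤ C)
    (y s : ℝ) : |f y * n s| ≤ C * B := by
  rw [abs_mul]
  exact mul_le_mul (hC y) (hn s) (abs_nonneg _) ((abs_nonneg _).trans (hC y))

lemma jumpOp_integrable (hg : Measurable g) (hnm : Measurable n) (hn : ∀ s, |n s| ≤ B)
    {f : ℝ → ℝ} {C : ℝ} (hf : Measurable f) (hC : ∀ x, |f x| ≤ C) (x a b : ℝ) :
    IntervalIntegrable (fun s => f (x - g s) * n s) volume a b :=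
  intervalIntegrable_of_bdd (C := C * B) (by fun_prop)
    (fun s => abs_mul_weight_le hn hC _ _) a b

lemma jumpOp_measurable (hg : Measurable g) (hnm : Measurable n) {f : ℝ → ℝ}
    (hf : Measurable f) (a b : ℝ) : Measurable (jumpOp g n a b f) := by
  have h : Measurable (fun p : ℝ × ℝ => f (p.1 - g p.2) * n p.2) := by fun_prop
  have key : ∀ s : Set ℝ, Measurable fun x => ∫ y in s, f (x - g y) * n y := fun s =>
    (h.stronglyMeasurable.integral_prod_right (ν := volume.restrict s)).measurable
  exact (key _).sub (key _)

lemma jumpOp_bound (hn : ∀ s, |n s| ≤ B) {f : ℝ → ℝ} {C : ℝ} (hC : ∀ x, |f x| ≤ C)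
    {a b : ℝ} (hab : a ≤ b) (x : ℝ) : |jumpOp g n a b f x| ≤ B * (b - a) * C := by
  have := intervalIntegral.norm_integral_le_of_norm_le_const (a := a) (b := b)
    (f := fun s => f (x - g s) * n s) (C := C * B)
    (fun s _ => abs_mul_weight_le hn hC _ _)
  rw [abs_of_nonneg (by linarith : 0 ≤ b - a)] at this
  calc _ ≤ C * B * (b - a) := this
    _ = _ := by ring

lemma jumpOp_add (hg : Measurable g) (hnm : Measurable n) (hn : ∀ s, |n s| ≤ B)
    {f₁ f₂ : ℝ → ℝ} {C₁ C₂ : ℝ} (h₁ : Measurable f₁) (hC₁ : ∀ x, |f₁ x| ≤ C₁)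
    (h₂ : Measurable f₂) (hC₂ : ∀ x, |f₂ x| ≤ C₂) (a b x : ℝ) :
    jumpOp g n a b (fun y => f₁ y + f₂ y) x = jumpOp g n a b f₁ x + jumpOp g n a b f₂ x := by
  unfold jumpOp
  rw [← intervalIntegral.integral_add (jumpOp_integrable hg hnm hn h₁ hC₁ x a b)
    (jumpOp_integrable hg hnm hn h₂ hC₂ x a b)]
  simp only [add_mul]

lemma jumpOp_const_mul (c : ℝ) (f : ℝ → ℝ) (a b x : ℝ) :
    jumpOp g n a b (fun y => c * f y) x = c * jumpOp g n a b f x := by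
  unfold jumpOp
  rw [← intervalIntegral.integral_const_mul]
  simp only [mul_assoc]

lemma jumpOp_adjacent (hg : Measurable g) (hnm : Measurable n) (hn : ∀ s, |n s| ≤ B)
    {f : ℝ → ℝ} {C : ℝ} (hf : Measurable f) (hC : ∀ x, |f x| ≤ C) (a b c x : ℝ) :
    jumpOp g n a c f x = jumpOp g n a b f x + jumpOp g n b c f x :=
  (intervalIntegral.integral_add_adjacent_intervals (jumpOp_integrable hg hnm hn hf hC x a b)
    (jumpOp_integrable hg hnm hn hf hC x b c)).symm

lemma jumpOp_comm (hg : Measurable g) (hnm : Measurable n) (hn : ∀ s, |n s| ≤ B)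
    {f : ℝ → ℝ} {C : ℝ} (hf : Measurable f) (hC : ∀ x, |f x| ≤ C) {a b c d : ℝ}
    (hab : a ≤ b) (hcd : c ≤ d) (x : ℝ) :
    jumpOp g n a b (jumpOp g n c d f) x = jumpOp g n c d (jumpOp g n a b f) x := by
  unfold jumpOp
  simp only [intervalIntegral.integral_of_le hab, intervalIntegral.integral_of_le hcd,
    ← integral_mul_const]
  rw [integral_integral_swap]
  · refine integral_congr_ae (Eventually.of_forall fun r => ?_)
    refine integral_congr_ae (Eventually.of_forall fun s => ?_)
    simp only [sub_right_comm x (g s) (g r)]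
    ring
  · refine Integrable.of_bound (C := C * B * B) (Measurable.aestronglyMeasurable ?_)
      (Eventually.of_forall fun p => ?_)
    · simp only [Function.uncurry_def]
      fun_prop
    · simp only [Function.uncurry_def, Real.norm_eq_abs, abs_mul _ (n p.1)]
      have h := abs_mul_weight_le hn hC (x - g p.1 - g p.2) p.2
      exact mul_le_mul h (hn _) (abs_nonneg _) ((abs_nonneg _).trans h)

lemma iterate_measurable (hg : Measurable g) (hnm : Measurable n) {f : ℝ → ℝ}
    (hf : Measurable f) (a b : ℝ) (m : ℕ) : Measurable ((jumpOp g n a b)^[m] f) := by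
  induction m with
  | zero => exact hf
  | succ m ih =>
    rw [Function.iterate_succ_apply']
    exact jumpOp_measurable hg hnm ih a b

lemma iterate_bound (hn : ∀ s, |n s| ≤ B) {f : ℝ → ℝ} (hC : ∀ x, |f x| ≤ 1) {a b K : ℝ}
    (hab : a ≤ b) (hK : B * (b - a) ≤ K) (m : ℕ) (x : ℝ) :
    |(jumpOp g n a b)^[m] f x| ≤ K ^ m := by
  induction m generalizing x with
  | zero => simpa using hC x
  | succ m ih =>
    rw [Function.iterate_succ_apply', pow_succ']
    refine (jumpOp_bound hn ih hab x).trans ?_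
    exact mul_le_mul_of_nonneg_right hK ((abs_nonneg _).trans (ih x))

/-! ### Perturbation of the operator powers and of the exponential series -/

/-- Second-order expansion `(A + D)^m = A^m + m D A^(m-1) + R_m` with `|R_m| ≤ m² K^m h²`, where
`A`, `D` are the operators on `[0,t]` and `[t,t+h]`. The remainders satisfy
`R_(m+1) = (A + D) R_m + m D² A^(m-1)`. -/
lemma iterate_remainder (hg : Measurable g) (hnm : Measurable n) (hn : ∀ s, |n s| ≤ B)
    {f : ℝ → ℝ} (hf : Measurable f) (hC : ∀ x, |f x| ≤ 1) {t h K : ℝ} (ht : 0 ≤ t)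
    (h0 : 0 ≤ h) (hB : B ≤ K) (hK0 : 0 ≤ K) (hK : B * (t + h) ≤ K) (hKt : B * t ≤ K)
    (m : ℕ) (x : ℝ) :
    |(jumpOp g n 0 (t + h))^[m] f x - (jumpOp g n 0 t)^[m] f x
      - m * jumpOp g n t (t + h) ((jumpOp g n 0 t)^[m - 1] f) x| ≤ (m:ℝ) ^ 2 * K ^ m * h ^ 2 := by
  have hth : t ≤ t + h := by linarith
  have h0th : 0 ≤ t + h := by linarith
  set A := jumpOp g n 0 t with hA
  set D := jumpOp g n t (t + h) with hD
  set E := jumpOp g n 0 (t + h) with hE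
  have hAm : ∀ m, Measurable (A^[m] f) := iterate_measurable hg hnm hf 0 t
  have hEm : ∀ m, Measurable (E^[m] f) := iterate_measurable hg hnm hf 0 (t + h)
  have hAb : ∀ m x, |A^[m] f x| ≤ K ^ m := iterate_bound hn hC ht (by simpa using hKt)
  have hEb : ∀ m x, |E^[m] f x| ≤ K ^ m := iterate_bound hn hC h0th (by simpa using hK)
  have hDbound : ∀ {φ : ℝ → ℝ} {C : ℝ}, (∀ x, |φ x| ≤ C) → ∀ x, |D φ x| ≤ K * h * C := by
    intro φ C hφ x
    refine (jumpOp_bound hn hφ hth x).trans ?_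
    have hCn : 0 ≤ C := (abs_nonneg _).trans (hφ x)
    rw [add_sub_cancel_left]
    gcongr
  induction m generalizing x with
  | zero => simp
  | succ m ih =>
    set v : ℝ → ℝ := fun y => (m:ℝ) * D (A^[m - 1] f) y with hv
    set R : ℝ → ℝ := fun y => E^[m] f y - A^[m] f y - v y with hR
    have hDm : Measurable (D (A^[m - 1] f)) := jumpOp_measurable hg hnm (hAm _) _ _
    have hvm : Measurable v := hDm.const_mul _
    have hvb : ∀ y, |v y| ≤ m * (K * h * K ^ (m - 1)) := by
      intro y
      rw [hv]
      simp only [abs_mul, Nat.abs_cast]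
      exact mul_le_mul_of_nonneg_left (hDbound (hAb _) y) (Nat.cast_nonneg _)
    have hRm : Measurable R := ((hEm m).sub (hAm m)).sub hvm
    have hRb : ∀ y, |R y| ≤ (m:ℝ) ^ 2 * K ^ m * h ^ 2 := fun y => ih y
    have hEeq : E^[m] f = fun y => A^[m] f y + (v y + R y) := by
      funext y; simp only [hR]; ring
    have hvRm : Measurable fun y => v y + R y := hvm.add hRm
    have hvRb : ∀ y, |v y + R y| ≤ m * (K * h * K ^ (m - 1)) + (m:ℝ) ^ 2 * K ^ m * h ^ 2 :=
      fun y => (abs_add_le _ _).trans (add_le_add (hvb y) (hRb y))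
    have hAv : A v x = m * D (A^[m] f) x := by
      rw [hv, hA, jumpOp_const_mul, ← hA]
      rcases m with _ | k
      · simp
      · congr 1
        rw [hA, hD, jumpOp_comm hg hnm hn (hAm _) (hAb _) ht hth, Function.iterate_succ_apply']
        simp [hA]
    have hexp : E^[m + 1] f x = A^[m + 1] f x + D (A^[m] f) x + A v x + D v x + E R x := by
      have hsplit : E^[m + 1] f x = E (A^[m] f) x + (E v x + E R x) := by
        rw [Function.iterate_succ_apply', hEeq, hE,
          jumpOp_add hg hnm hn (hAm m) (hAb m) hvRm hvRb,
          jumpOp_add hg hnm hn hvm hvb hRm hRb]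
      rw [hsplit, hE, jumpOp_adjacent hg hnm hn (hAm m) (hAb m) 0 t (t + h),
        jumpOp_adjacent hg hnm hn hvm hvb 0 t (t + h), Function.iterate_succ_apply']
      ring
    have hrem : E^[m + 1] f x - A^[m + 1] f x
        - ((m + 1 : ℕ) : ℝ) * D (A^[m + 1 - 1] f) x = D v x + E R x := by
      rw [hexp, hAv, Nat.add_sub_cancel]; push_cast; ring
    have hDv : |D v x| ≤ m * K ^ (m + 1) * h ^ 2 := by
      refine (hDbound hvb x).trans_eq ?_
      rcases m with _ | k
      · simp
      · simp only [Nat.add_sub_cancel]; ring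
    have hER : |E R x| ≤ (m:ℝ) ^ 2 * K ^ (m + 1) * h ^ 2 := by
      refine (jumpOp_bound hn hRb h0th x).trans ?_
      have : B * (t + h - 0) ≤ K := by simpa using hK
      calc _ ≤ K * ((m:ℝ) ^ 2 * K ^ m * h ^ 2) := by gcongr
        _ = _ := by ring
    rw [hrem]
    refine (abs_add_le _ _).trans ((add_le_add hDv hER).trans ?_)
    have hnn : 0 ≤ K ^ (m + 1) * h ^ 2 := by positivity
    have : (0:ℝ) ≤ m := Nat.cast_nonneg m
    push_cast
    nlinarith [mul_nonneg this hnn]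

/-- The unnormalised series `exp(A_t) f`. -/
noncomputable def jumpSeries (g n : ℝ → ℝ) (t : ℝ) (f : ℝ → ℝ) (x : ℝ) : ℝ :=
  ∑' m : ℕ, ((m.factorial : ℝ))⁻¹ * (jumpOp g n 0 t)^[m] f x

lemma summable_sq_mul_pow_div_factorial (K : ℝ) :
    Summable fun m : ℕ => ((m.factorial : ℝ))⁻¹ * ((m:ℝ) ^ 2 * K ^ m) := by
  -- Dominated by the exponential series, since `m² ≤ 4 ^ m`.
  have h := Real.summable_pow_div_factorial (4 * |K|)
  refine Summable.of_norm_bounded h fun m => ?_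
  have h2 : (m:ℝ) ≤ 2 ^ m := by exact_mod_cast (Nat.lt_two_pow_self (n := m)).le
  have h4 : (m:ℝ) ^ 2 ≤ 4 ^ m := by
    calc (m:ℝ) ^ 2 ≤ (2 ^ m) ^ 2 := by gcongr
      _ = 4 ^ m := by rw [← pow_mul, mul_comm, pow_mul]; norm_num
  rw [norm_mul, norm_mul, norm_inv, norm_pow, norm_pow, Real.norm_natCast, Real.norm_natCast,
    Real.norm_eq_abs, mul_pow, div_eq_inv_mul]
  gcongr

lemma jumpSeries_summable (hn : ∀ s, |n s| ≤ B) {f : ℝ → ℝ} (hC : ∀ x, |f x| ≤ 1) {t : ℝ}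
    (ht : 0 ≤ t) (x : ℝ) :
    Summable fun m : ℕ => ((m.factorial : ℝ))⁻¹ * (jumpOp g n 0 t)^[m] f x := by
  refine Summable.of_norm_bounded (Real.summable_pow_div_factorial (B * t)) fun m => ?_
  rw [norm_mul, norm_inv, Real.norm_natCast, div_eq_inv_mul]
  gcongr
  exact iterate_bound hn hC ht (by simp) m x

lemma jumpSeries_measurable (hg : Measurable g) (hnm : Measurable n) (hn : ∀ s, |n s| ≤ B)
    {f : ℝ → ℝ} (hf : Measurable f) (hC : ∀ x, |f x| ≤ 1) {t : ℝ} (ht : 0 ≤ t) :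
    Measurable (jumpSeries g n t f) := by
  refine measurable_of_tendsto_metrizable (f := fun (N : ℕ) x => ∑ m ∈ Finset.range N,
    ((m.factorial : ℝ))⁻¹ * (jumpOp g n 0 t)^[m] f x) ?_ ?_
  · intro N
    exact Finset.measurable_fun_sum _ fun m _ => (iterate_measurable hg hnm hf 0 t m).const_mul _
  · rw [tendsto_pi_nhds]
    exact fun x => (jumpSeries_summable hn hC ht x).hasSum.tendsto_sum_nat

lemma jumpSeries_bound (hn : ∀ s, |n s| ≤ B) {f : ℝ → ℝ} (hC : ∀ x, |f x| ≤ 1) {t : ℝ}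
    (ht : 0 ≤ t) (x : ℝ) : |jumpSeries g n t f x| ≤ ∑' m : ℕ, (B * t) ^ m / m.factorial := by
  refine tsum_of_norm_bounded
    (f := fun m : ℕ => ((m.factorial : ℝ))⁻¹ * (jumpOp g n 0 t)^[m] f x)
    (Real.summable_pow_div_factorial (B * t)).hasSum fun m => ?_
  rw [norm_mul, norm_inv, Real.norm_natCast, div_eq_inv_mul]
  gcongr
  exact iterate_bound hn hC ht (by simp) m x

/-- `jumpOp` may be applied to the series term by term, by dominated convergence. -/
lemma jumpOp_jumpSeries (hg : Measurable g) (hnm : Measurable n) (hn : ∀ s, |n s| ≤ B)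
    {f : ℝ → ℝ} (hf : Measurable f) (hC : ∀ x, |f x| ≤ 1) {t : ℝ} (ht : 0 ≤ t) (a b x : ℝ) :
    HasSum (fun m : ℕ => ((m.factorial : ℝ))⁻¹ * jumpOp g n a b ((jumpOp g n 0 t)^[m] f) x)
      (jumpOp g n a b (jumpSeries g n t f) x) := by
  have h := intervalIntegral.hasSum_integral_of_dominated_convergence (μ := volume) (a := a)
    (b := b)
    (F := fun (m : ℕ) s => ((m.factorial : ℝ))⁻¹ * (jumpOp g n 0 t)^[m] f (x - g s) * n s)
    (f := fun s => jumpSeries g n t f (x - g s) * n s)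
    (bound := fun m _ => (B * t) ^ m / m.factorial * B) ?_ ?_ ?_ ?_ ?_
  · have he : ∀ m : ℕ, ((m.factorial : ℝ))⁻¹ * jumpOp g n a b ((jumpOp g n 0 t)^[m] f) x =
        ∫ s in a..b, ((m.factorial : ℝ))⁻¹ * (jumpOp g n 0 t)^[m] f (x - g s) * n s :=
      fun m => (jumpOp_const_mul _ _ a b x).symm
    simp only [he]
    exact h
  · intro m
    have := iterate_measurable hg hnm hf 0 t m
    exact Measurable.aestronglyMeasurable (by fun_prop)
  · intro m
    refine Eventually.of_forall fun s _ => ?_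
    refine abs_mul_weight_le (f := fun y => ((m.factorial : ℝ))⁻¹ * (jumpOp g n 0 t)^[m] f y)
      hn (fun y => ?_) (x - g s) s
    rw [abs_mul, abs_inv, Nat.abs_cast, div_eq_inv_mul]
    gcongr
    exact iterate_bound hn hC ht (by simp) m y
  · exact Eventually.of_forall fun s _ =>
      (Real.summable_pow_div_factorial (B * t)).mul_right B
  · exact _root_.intervalIntegrable_const
  · exact Eventually.of_forall fun s _ =>
      (jumpSeries_summable hn hC ht (x - g s)).hasSum.mul_right (n s)

/-- First-order expansion of `exp(A + D) f` in `D`. The terms `m D A^(m-1) f / m!` sum to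
`D exp(A) f`. -/
lemma series_remainder (hg : Measurable g) (hnm : Measurable n) (hn : ∀ s, |n s| ≤ B)
    {f : ℝ → ℝ} (hf : Measurable f) (hC : ∀ x, |f x| ≤ 1) {t h K : ℝ} (ht : 0 ≤ t)
    (h0 : 0 ≤ h) (hB : B ≤ K) (hK0 : 0 ≤ K) (hK : B * (t + h) ≤ K) (hKt : B * t ≤ K) (x : ℝ) :
    |jumpSeries g n (t + h) f x - jumpSeries g n t f x
      - jumpOp g n t (t + h) (jumpSeries g n t f) x|
      ≤ (∑' m : ℕ, ((m.factorial : ℝ))⁻¹ * ((m:ℝ) ^ 2 * K ^ m)) * h ^ 2 := by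
  have hD := jumpOp_jumpSeries hg hnm hn hf hC ht t (t + h) x
  have hD' : HasSum (fun m : ℕ => ((m.factorial : ℝ))⁻¹ *
      (m * jumpOp g n t (t + h) ((jumpOp g n 0 t)^[m - 1] f) x))
      (jumpOp g n t (t + h) (jumpSeries g n t f) x) := by
    -- The term `m = 0` vanishes because of the factor `m`; here `m - 1` is truncated.
    refine (hasSum_nat_add_iff' 1).1 ?_
    have he : ∀ m : ℕ, (((m + 1).factorial : ℝ))⁻¹ * (((m + 1 : ℕ) : ℝ) *
        jumpOp g n t (t + h) ((jumpOp g n 0 t)^[m + 1 - 1] f) x) =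
        ((m.factorial : ℝ))⁻¹ * jumpOp g n t (t + h) ((jumpOp g n 0 t)^[m] f) x := by
      intro m
      have : (m.factorial : ℝ) ≠ 0 := by positivity
      rw [Nat.factorial_succ, Nat.add_sub_cancel]
      push_cast
      field_simp
    simp only [he]
    simpa using hD
  have hsum := ((jumpSeries_summable (g := g) hn hC (by linarith : 0 ≤ t + h) x).hasSum.sub
    (jumpSeries_summable (g := g) hn hC ht x).hasSum).sub hD'
  have hS := ((summable_sq_mul_pow_div_factorial K).mul_right (h ^ 2)).hasSum
  rw [tsum_mul_right] at hS
  unfold jumpSeries at hsum ⊢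
  rw [← Real.norm_eq_abs]
  erw [← hsum.tsum_eq]
  refine tsum_of_norm_bounded hS fun m => ?_
  rw [← mul_sub, ← mul_sub, norm_mul, norm_inv, Real.norm_natCast, mul_assoc]
  gcongr
  exact iterate_remainder hg hnm hn hf hC ht h0 hB hK0 hK hKt m x

/-! ### Series representation and the right derivative -/

/-- The integral over the cube is the iterated operator, by peeling off one coordinate. -/
lemma integral_pi_eq_iterate (hg : Measurable g) (hnm : Measurable n) (hn : ∀ s, |n s| ≤ B)
    {f : ℝ → ℝ} (hf : Measurable f) (hC : ∀ x, |f x| ≤ 1) {t : ℝ} (ht : 0 ≤ t) (m : ℕ) (x : ℝ) :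
    ∫ s in Set.univ.pi (fun _ : Fin m => Set.Ioo (0:ℝ) t),
        f (x - ∑ i, g (s i)) * ∏ i, n (s i) = (jumpOp g n 0 t)^[m] f x := by
  have hvol : ∀ k : ℕ, (volume : Measure (Fin k → ℝ)).restrict
      (Set.univ.pi (fun _ : Fin k => Set.Ioo (0:ℝ) t)) =
      Measure.pi fun _ : Fin k => volume.restrict (Ioo (0:ℝ) t) := fun k => by
    rw [volume_pi, Measure.restrict_pi_pi]
  rw [hvol]
  induction m generalizing x with
  | zero => simp [measureReal_def]
  | succ m ih =>
    have hmp := (measurePreserving_piFinSuccAbove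
      (fun _ : Fin (m + 1) => volume.restrict (Ioo (0:ℝ) t)) 0).symm
    rw [← hmp.integral_comp' , integral_prod]
    · rw [Function.iterate_succ_apply', jumpOp, intervalIntegral.integral_of_le ht,
        integral_Ioc_eq_integral_Ioo]
      refine integral_congr_ae (Eventually.of_forall fun s => ?_)
      simp only [← ih (x - g s), ← integral_mul_const]
      refine integral_congr_ae (Eventually.of_forall fun r => ?_)
      simp [MeasurableEquiv.piFinSuccAbove, Fin.sum_univ_succ, Fin.prod_univ_succ, sub_sub]
      ring
    · have hmeas : Measurable fun s : Fin (m + 1) → ℝ =>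
          f (x - ∑ i, g (s i)) * ∏ i, n (s i) := by fun_prop
      refine Integrable.of_bound (C := 1 * B ^ (m + 1))
        (hmeas.comp (MeasurableEquiv.measurable _)).aestronglyMeasurable
        (Eventually.of_forall fun p => ?_)
      rw [norm_mul, norm_prod]
      refine mul_le_mul (hC _) ?_ (by positivity) zero_le_one
      refine (Finset.prod_le_prod (fun _ _ => norm_nonneg _) (fun i _ => hn _)).trans_eq ?_
      simp

lemma poissonCDF_eq (hg : Measurable g) (hnm : Measurable n) (hn : ∀ s, |n s| ≤ B)
    {f : ℝ → ℝ} (hf : Measurable f) (hC : ∀ x, |f x| ≤ 1) {t : ℝ} (ht : 0 ≤ t) (x : ℝ) :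
    poissonCDF g n f x t = Real.exp (-(∫ s in (0:ℝ)..t, n s)) * jumpSeries g n t f x := by
  unfold poissonCDF jumpSeries
  simp only [integral_pi_eq_iterate hg hnm hn hf hC ht]

lemma jumpSeries_hasDeriv (hg : Measurable g) (hnm : Measurable n) (hn : ∀ s, |n s| ≤ B)
    {f : ℝ → ℝ} (hf : Measurable f) (hC : ∀ x, |f x| ≤ 1) {t : ℝ} (ht : 0 ≤ t)
    (hgt : ContinuousWithinAt g (Ioi t) t) (hnt : ContinuousWithinAt n (Ioi t) t) {x : ℝ}
    (hS : ContinuousAt (jumpSeries g n t f) (x - g t)) :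
    HasDerivWithinAt (fun τ => jumpSeries g n τ f x) (jumpSeries g n t f (x - g t) * n t)
      (Ioi t) t := by
  have hSm := jumpSeries_measurable (g := g) hg hnm hn hf hC ht
  have hSb := jumpSeries_bound (g := g) hn hC ht
  have hB0 : 0 ≤ B := (abs_nonneg _).trans (hn 0)
  set S := jumpSeries g n t f with hSdef
  set I : ℝ → ℝ := fun s => S (x - g s) * n s with hI
  have hIm : Measurable I := by fun_prop
  have hIc : ContinuousWithinAt I (Ioi t) t :=
    (ContinuousAt.comp_continuousWithinAt (f := fun s => x - g s) hS
      (continuousWithinAt_const.sub hgt)).mul hnt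
  have hFTC : HasDerivWithinAt (fun τ => ∫ s in t..τ, I s) (I t) (Ioi t) t :=
    (intervalIntegral.integral_hasDerivWithinAt_right (s := Ici t) (t := Ioi t)
      (jumpOp_integrable hg hnm hn hSm hSb x t t)
      (hIm.stronglyMeasurable.stronglyMeasurableAtFilter) hIc).mono Ioi_subset_Ici_self
  -- `K` bounds the norms of all operators involved as long as `τ - t ≤ 1`.
  set K := B * (t + 1) + B with hK
  set M := ∑' m : ℕ, ((m.factorial : ℝ))⁻¹ * ((m:ℝ) ^ 2 * K ^ m) with hM
  have hK0 : 0 ≤ K := by positivity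
  have hrem : HasDerivWithinAt
      (fun τ => jumpSeries g n τ f x - S x - ∫ s in t..τ, I s) 0 (Ioi t) t := by
    rw [hasDerivWithinAt_iff_isLittleO]
    simp only [intervalIntegral.integral_same, sub_zero, smul_zero, ← hSdef, sub_self]
    have hO : (fun τ => jumpSeries g n τ f x - S x - ∫ s in t..τ, I s)
        =O[𝓝[>] t] fun τ => (τ - t) ^ 2 := by
      refine Asymptotics.IsBigO.of_bound M ?_
      filter_upwards [Ioo_mem_nhdsGT (by linarith : t < t + 1)] with τ hτ
      have hh0 : 0 ≤ τ - t := by linarith [hτ.1]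
      have hh1 : τ - t ≤ 1 := by linarith [hτ.2]
      have h1 : B ≤ K := by rw [hK]; nlinarith [mul_nonneg hB0 ht]
      have h2 : B * (t + (τ - t)) ≤ K := by
        rw [hK]; nlinarith [mul_le_mul_of_nonneg_left hh1 hB0]
      have h3 : B * t ≤ K := by rw [hK]; nlinarith
      have := series_remainder hg hnm hn hf hC ht hh0 h1 hK0 h2 h3 x
      rw [add_sub_cancel] at this
      rw [norm_pow, Real.norm_of_nonneg hh0]
      exact this
    refine hO.trans_isLittleO ?_
    have hlim : Tendsto (fun τ : ℝ => τ - t) (𝓝[>] t) (𝓝 0) := by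
      have : Tendsto (fun τ : ℝ => τ - t) (𝓝 t) (𝓝 (t - t)) :=
        (continuous_id.sub continuous_const).tendsto t
      rw [sub_self] at this
      exact this.mono_left nhdsWithin_le_nhds
    exact ((Asymptotics.isLittleO_pow_id one_lt_two).comp_tendsto hlim)
  have := (hrem.add hFTC).add_const (S x)
  rw [zero_add] at this
  refine this.congr_of_eventuallyEq (Eventually.of_forall fun τ => ?_) ?_ <;> simp

lemma poissonCDF_hasDeriv (hg : Measurable g) (hnm : Measurable n) (hn : ∀ s, |n s| ≤ B)
    {f : ℝ → ℝ} (hf : Measurable f) (hC : ∀ x, |f x| ≤ 1) {t : ℝ} (ht : 0 ≤ t)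
    (hgt : ContinuousWithinAt g (Ioi t) t) (hnt : ContinuousWithinAt n (Ioi t) t) {x : ℝ}
    (hcont : ContinuousAt (fun y => poissonCDF g n f y t) (x - g t)) :
    HasDerivWithinAt (fun τ => poissonCDF g n f x τ)
      (-(n t) * (poissonCDF g n f x t - poissonCDF g n f (x - g t) t)) (Ioi t) t := by
  have hS : ContinuousAt (jumpSeries g n t f) (x - g t) := by
    have h := hcont.const_mul (Real.exp (∫ s in (0:ℝ)..t, n s))
    refine h.congr (Eventually.of_forall fun y => ?_)
    simp only [poissonCDF_eq hg hnm hn hf hC ht]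
    rw [← mul_assoc, ← Real.exp_add]
    simp
  have h1 := jumpSeries_hasDeriv hg hnm hn hf hC ht hgt hnt hS
  have hΛ : HasDerivWithinAt (fun τ => ∫ s in (0:ℝ)..τ, n s) (n t) (Ioi t) t :=
    (intervalIntegral.integral_hasDerivWithinAt_right (s := Ici t) (t := Ioi t)
      (intervalIntegrable_of_bdd hnm hn 0 t)
      (hnm.stronglyMeasurable.stronglyMeasurableAtFilter) hnt).mono Ioi_subset_Ici_self
  have h2 := hΛ.neg.exp.mul h1
  have h3 : HasDerivWithinAt (fun τ => poissonCDF g n f x τ) _ (Ioi t) t :=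
    h2.congr_of_eventuallyEq
      (by
        filter_upwards [self_mem_nhdsWithin] with τ hτ
        exact poissonCDF_eq hg hnm hn hf hC (ht.trans (le_of_lt hτ)) x)
      (poissonCDF_eq hg hnm hn hf hC ht x)
  convert h3 using 1
  simp only [poissonCDF_eq hg hnm hn hf hC ht, Pi.neg_apply]
  ring

end Operators

/-! ### Reduction to globally measurable data -/

lemma poissonCDF_congr {g g' n n' : ℝ → ℝ} (f : ℝ → ℝ) {t : ℝ} (ht : 0 ≤ t)
    (hg : ∀ s ∈ Ioo 0 t, g s = g' s) (hn : ∀ s ∈ Ioo 0 t, n s = n' s) (x : ℝ) :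
    poissonCDF g n f x t = poissonCDF g' n' f x t := by
  unfold poissonCDF
  have h1 : ∫ s in (0:ℝ)..t, n s = ∫ s in (0:ℝ)..t, n' s := by
    simp only [intervalIntegral.integral_of_le ht, integral_Ioc_eq_integral_Ioo]
    exact setIntegral_congr_fun measurableSet_Ioo hn
  rw [h1]
  congr 1
  refine tsum_congr fun m => ?_
  congr 1
  refine setIntegral_congr_fun (MeasurableSet.univ_pi fun _ => measurableSet_Ioo) fun s hs => ?_
  rw [Finset.sum_congr rfl fun i _ => hg (s i) (hs i (mem_univ i)),
    Finset.prod_congr rfl fun i _ => hn (s i) (hs i (mem_univ i))]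

/-- **Kolmogorov–Feller equation for the CDF of a Poisson stochastic integral**
(Theorem 2.1 of the paper).  If `g` is right-continuous on `[0,T]` with
`∫_0^T min(g(s),1) n(s) ds < ∞`, `n` is continuous, nonnegative and bounded on `[0,T]`,
and `F₀` is a CDF, then for every `t ∈ [0,T)` and every `x` such that `F(·,t)` is
continuous at `x − g(t)`, the right time-derivative of `F(x,·)` at `t` exists and equals
`−n(t)·(F(x,t) − F(x − g(t), t))`. -/
theorem kolmogorov_feller_cdf (T : ℝ) (hT : 0 < T) (g n F₀ : ℝ → ℝ)
    (hg_rc : ∀ t ∈ Set.Ico (0:ℝ) T, ContinuousWithinAt g (Set.Ici t) t)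
    (hg_int : IntegrableOn (fun s => min (g s) 1 * n s) (Set.Ioc 0 T) volume)
    (hn_cont : ContinuousOn n (Set.Icc 0 T))
    (hn_nonneg : ∀ s ∈ Set.Icc (0:ℝ) T, 0 ≤ n s)
    (hn_bdd : ∃ B, ∀ s ∈ Set.Icc (0:ℝ) T, n s ≤ B)
    (hF₀_range : ∀ x, F₀ x ∈ Set.Icc (0:ℝ) 1)
    (hF₀_mono : Monotone F₀)
    (hF₀_rc : ∀ x, ContinuousWithinAt F₀ (Set.Ici x) x)
    (hF₀_bot : Filter.Tendsto F₀ Filter.atBot (nhds 0))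
    (hF₀_top : Filter.Tendsto F₀ Filter.atTop (nhds 1))
    (t : ℝ) (ht : t ∈ Set.Ico (0:ℝ) T) (x : ℝ)
    (hcont : ContinuousAt (fun y => poissonCDF g n F₀ y t) (x - g t)) :
    HasDerivWithinAt (fun τ => poissonCDF g n F₀ x τ)
      (-(n t) * (poissonCDF g n F₀ x t - poissonCDF g n F₀ (x - g t) t))
      (Set.Ioi t) t := by
  obtain ⟨B, hB⟩ := hn_bdd
  have hB0 : 0 ≤ B := (hn_nonneg 0 ⟨le_rfl, hT.le⟩).trans (hB 0 ⟨le_rfl, hT.le⟩)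
  set g' := (Set.Ico (0:ℝ) T).indicator g with hg'
  set n' := (Set.Icc (0:ℝ) T).indicator n with hn'
  have hg'm : Measurable g' := measurable_indicator_of_rightCont T g hg_rc
  have hn'm : Measurable n' := by
    rw [hn', ← piecewise_eq_indicator]
    exact hn_cont.measurable_piecewise (g := 0) continuousOn_const measurableSet_Icc
  have hn'b : ∀ s, |n' s| ≤ B := by
    intro s
    by_cases hs : s ∈ Set.Icc (0:ℝ) T
    · rw [hn', indicator_of_mem hs, abs_of_nonneg (hn_nonneg s hs)]
      exact hB s hs
    · rw [hn', indicator_of_notMem hs, abs_zero]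
      exact hB0
  have hgg : ∀ s ∈ Ico 0 T, g' s = g s := fun s hs => indicator_of_mem hs g
  have hnn : ∀ s ∈ Icc 0 T, n' s = n s := fun s hs => indicator_of_mem hs n
  have hcdf : ∀ τ ∈ Ico 0 T, ∀ y, poissonCDF g n F₀ y τ = poissonCDF g' n' F₀ y τ := by
    intro τ hτ y
    refine poissonCDF_congr F₀ hτ.1 (fun s hs => ?_) (fun s hs => ?_) y
    · exact (hgg s ⟨hs.1.le, hs.2.trans hτ.2⟩).symm
    · exact (hnn s ⟨hs.1.le, (hs.2.trans hτ.2).le⟩).symm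
  have hev : ∀ᶠ s in 𝓝[>] t, s ∈ Ico 0 T := by
    filter_upwards [Ioo_mem_nhdsGT ht.2] with s hs
    exact ⟨ht.1.trans hs.1.le, hs.2⟩
  have hgt : ContinuousWithinAt g' (Ioi t) t :=
    ((hg_rc t ht).mono Ioi_subset_Ici_self).congr_of_eventuallyEq
      (hev.mono hgg) (hgg t ht)
  have hnt : ContinuousWithinAt n' (Ioi t) t := by
    have h : ContinuousWithinAt n (Ioi t) t :=
      (hn_cont t (Ico_subset_Icc_self ht)).mono_of_mem_nhdsWithin
        (hev.mono fun s hs => Ico_subset_Icc_self hs)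
    exact h.congr_of_eventuallyEq (hev.mono fun s hs => hnn s (Ico_subset_Icc_self hs))
      (hnn t (Ico_subset_Icc_self ht))
  have hF₀b : ∀ y, |F₀ y| ≤ 1 := fun y => by
    rw [abs_of_nonneg (hF₀_range y).1]; exact (hF₀_range y).2
  simp only [hcdf t ht] at hcont ⊢
  rw [← hgg t ht] at hcont ⊢
  rw [← hnn t (Ico_subset_Icc_self ht)]
  refine (poissonCDF_hasDeriv hg'm hn'm hn'b hF₀_mono.measurable hF₀b ht.1 hgt hnt
    hcont).congr_of_eventuallyEq (hev.mono fun τ hτ => hcdf τ hτ x) (hcdf t ht x)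
end

section
/- Let X and X₀ be independent non-negative real random variables with cumulative distribution functions F and F₀ respectively, and suppose F ∈ C^{0,γ}((0,∞)) and F₀ ∈ C^{0,γ₀}((0,∞)) for some 0 < γ, γ₀ ≤ 1. Then the cumulative distribution function F̄ of X₀ + X lies in C^{0,γ̄}((0,∞)) with γ̄ = min(γ, γ₀), and moreover: if γ₀ > γ then [F̄]_{C^{0,γ̄}((0,∞))} ≤ [F]_{C^{0,γ}((0,∞))} + max(1, [F₀]_{C^{0,γ₀}((0,∞))}); if γ₀ = γ then [F̄]_{C^{0,γ̄}((0,∞))} ≤ [F]_{C^{0,γ}((0,∞))} + [F₀]_{C^{0,γ₀}((0,∞))}; and if γ₀ < γ then [F̄]_{C^{0,γ̄}((0,∞))} ≤ [F₀]_{C^{0,γ₀}((0,∞))} + max(1, [F]_{C^{0,γ}((0,∞))}). -/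
/-!
Write `F`, `F₀`, `F̄` for the distribution functions of `X`, `X₀`, `X₀ + X`.
For `x < y`, the event `x < X₀ + X ≤ y` is split according to whether `X₀ ≤ x`. If `X₀ > x`,
nonnegativity of `X` gives `x < X₀ ≤ y`, an event of probability `F₀ y - F₀ x`. If `X₀ = u ≤ x`,
then `X` lies in `(x - u, y - u]`, an interval in `[0, ∞)` of length `y - x`, and by independence
(Fubini) the probability is at most `CF * (y - x) ^ γ`. The endpoint `x - u = 0` is not covered by
the Hölder hypothesis on `(0, ∞)` and is reached by right-continuity of `F`
(`measure_Ioc_le_of_holder`). Hence (`abs_cdfOf_add_sub_le`)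
`|F̄ x - F̄ y| ≤ CF * |x - y| ^ γ + |F₀ x - F₀ y|`.

When the exponents differ, this is used with the variable of smaller exponent in the role of `X`;
the increment of the other distribution function is lowered to the smaller exponent using its
Hölder bound if `|x - y| ≤ 1` and the trivial bound `1` otherwise.
-/

open MeasureTheory ProbabilityTheory

/-- The cumulative distribution function of a real random variable `Z`:
`F_Z(x) = Prob[Z ≤ x]`. -/
noncomputable def cdfOf {Ω : Type*} [MeasurableSpace Ω] (μ : Measure Ω) (Z : Ω → ℝ)
    (x : ℝ) : ℝ :=
  (μ {ω | Z ω ≤ x}).toReal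

lemma cdfOf_eq_cdf {Ω : Type*} [MeasurableSpace Ω] (μ : Measure Ω) [IsProbabilityMeasure μ]
    {Z : Ω → ℝ} (hZ : Measurable Z) (x : ℝ) : cdfOf μ Z x = cdf (μ.map Z) x := by
  have := Measure.isProbabilityMeasure_map (μ := μ) hZ.aemeasurable
  rw [cdf_eq_real, Measure.real, Measure.map_apply hZ measurableSet_Iic]
  rfl

lemma map_Ioc_eq {Ω : Type*} [MeasurableSpace Ω] (μ : Measure Ω) [IsProbabilityMeasure μ]
    {Z : Ω → ℝ} (hZ : Measurable Z) (x y : ℝ) :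
    μ.map Z (Set.Ioc x y) = ENNReal.ofReal (cdfOf μ Z y - cdfOf μ Z x) := by
  have := Measure.isProbabilityMeasure_map (μ := μ) hZ.aemeasurable
  rw [cdfOf_eq_cdf μ hZ, cdfOf_eq_cdf μ hZ, ← StieltjesFunction.measure_Ioc, measure_cdf]

/-- The Hölder bound on `(0, ∞)` controls the mass of intervals `(s, t]` with `0 ≤ s`; the case
`s = 0` holds by right-continuity, even if the law has an atom at `0`. -/
lemma measure_Ioc_le_of_holder {Ω : Type*} [MeasurableSpace Ω] (μ : Measure Ω)
    [IsProbabilityMeasure μ] {X : Ω → ℝ} (hX : Measurable X) {γ CF : ℝ} (hγ : 0 < γ)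
    (hCF : 0 ≤ CF)
    (hF : ∀ x ∈ Set.Ioi (0:ℝ), ∀ y ∈ Set.Ioi (0:ℝ),
      |cdfOf μ X x - cdfOf μ X y| ≤ CF * |x - y| ^ γ)
    {s t : ℝ} (hs : 0 ≤ s) (hst : s < t) :
    μ.map X (Set.Ioc s t) ≤ ENNReal.ofReal (CF * (t - s) ^ γ) := by
  rw [map_Ioc_eq μ hX]
  apply ENNReal.ofReal_le_ofReal
  have hlim : Filter.Tendsto (fun r => cdfOf μ X t - cdfOf μ X r) (nhdsWithin s (Set.Ioi s))
      (nhds (cdfOf μ X t - cdfOf μ X s)) := by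
    simp only [cdfOf_eq_cdf μ hX]
    exact tendsto_const_nhds.sub
      (((cdf (μ.map X)).right_continuous s).mono Set.Ioi_subset_Ici_self)
  refine le_of_tendsto hlim ?_
  filter_upwards [Ioo_mem_nhdsGT hst] with r hr
  refine (le_abs_self _).trans ((hF t (hs.trans_lt hst) r (hs.trans_lt hr.1)).trans ?_)
  rw [abs_of_pos (sub_pos.2 hr.2)]
  have h1 : 0 ≤ t - r := (sub_pos.2 hr.2).le
  have h2 : t - r ≤ t - s := by linarith [hr.1]
  gcongr

/-- The part of the estimate on `X₀ ≤ x`, integrated over the law of `X₀`. -/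
lemma measure_add_mem_Ioc_le {Ω : Type*} [MeasurableSpace Ω] (μ : Measure Ω)
    [IsProbabilityMeasure μ] {X X₀ : Ω → ℝ} (hX : Measurable X) (hX₀ : Measurable X₀)
    (hindep : IndepFun X X₀ μ) {γ CF : ℝ} (hγ : 0 < γ) (hCF : 0 ≤ CF)
    (hF : ∀ x ∈ Set.Ioi (0:ℝ), ∀ y ∈ Set.Ioi (0:ℝ),
      |cdfOf μ X x - cdfOf μ X y| ≤ CF * |x - y| ^ γ)
    {x y : ℝ} (hxy : x < y) :
    μ {ω | X₀ ω ≤ x ∧ X₀ ω + X ω ∈ Set.Ioc x y} ≤ ENNReal.ofReal (CF * (y - x) ^ γ) := by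
  have := Measure.isProbabilityMeasure_map (μ := μ) hX.aemeasurable
  have := Measure.isProbabilityMeasure_map (μ := μ) hX₀.aemeasurable
  let A : Set (ℝ × ℝ) := {p | p.2 ≤ x ∧ p.2 + p.1 ∈ Set.Ioc x y}
  have hA : MeasurableSet A :=
    (measurableSet_le measurable_snd measurable_const).inter
      ((measurable_snd.add measurable_fst) measurableSet_Ioc)
  have hmap := (indepFun_iff_map_prod_eq_prod_map_map hX.aemeasurable hX₀.aemeasurable).1 hindep
  calc μ {ω | X₀ ω ≤ x ∧ X₀ ω + X ω ∈ Set.Ioc x y}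
      = (μ.map fun ω => (X ω, X₀ ω)) A := by
        rw [Measure.map_apply (hX.prodMk hX₀) hA]; rfl
    _ = ∫⁻ u, μ.map X ((fun a => (a, u)) ⁻¹' A) ∂(μ.map X₀) := by
        rw [hmap, Measure.prod_apply_symm hA]
    _ ≤ ∫⁻ _, ENNReal.ofReal (CF * (y - x) ^ γ) ∂(μ.map X₀) := by
        refine lintegral_mono fun u => ?_
        by_cases hu : u ≤ x
        · have h := measure_Ioc_le_of_holder μ hX hγ hCF hF (sub_nonneg.2 hu)
            (sub_lt_sub_right hxy u)
          rw [sub_sub_sub_cancel_right] at h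
          refine (measure_mono ?_).trans h
          rintro a ⟨-, h1, h2⟩
          dsimp only at h1 h2
          exact ⟨by linarith, by linarith⟩
        · have : (fun a => (a, u)) ⁻¹' A = ∅ :=
            Set.eq_empty_of_forall_notMem fun a ha => hu ha.1
          simp [this]
    _ = ENNReal.ofReal (CF * (y - x) ^ γ) := by simp

lemma cdfOf_mono {Ω : Type*} [MeasurableSpace Ω] (μ : Measure Ω) [IsProbabilityMeasure μ]
    (Z : Ω → ℝ) : Monotone (cdfOf μ Z) := fun _ _ h =>
  ENNReal.toReal_mono (measure_ne_top _ _) (measure_mono fun _ hω => le_trans hω h)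

/-- The increment of the distribution function of the sum is at most the Hölder bound of one
summand plus the increment of the other. -/
lemma abs_cdfOf_add_sub_le {Ω : Type*} [MeasurableSpace Ω] (μ : Measure Ω)
    [IsProbabilityMeasure μ] {X X₀ : Ω → ℝ} (hX : Measurable X) (hX₀ : Measurable X₀)
    (hindep : IndepFun X X₀ μ) (hXnonneg : ∀ᵐ ω ∂μ, 0 ≤ X ω)
    {γ CF : ℝ} (hγ : 0 < γ) (hCF : 0 ≤ CF)
    (hF : ∀ x ∈ Set.Ioi (0:ℝ), ∀ y ∈ Set.Ioi (0:ℝ),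
      |cdfOf μ X x - cdfOf μ X y| ≤ CF * |x - y| ^ γ) (x y : ℝ) :
    |cdfOf μ (fun ω => X₀ ω + X ω) x - cdfOf μ (fun ω => X₀ ω + X ω) y| ≤
      CF * |x - y| ^ γ + |cdfOf μ X₀ x - cdfOf μ X₀ y| := by
  wlog hxy : x < y generalizing x y
  · rcases (not_lt.1 hxy).eq_or_lt with rfl | h
    · simp only [sub_self, abs_zero, add_zero]
      positivity
    · simpa only [abs_sub_comm] using this y x h
  have hS : Measurable fun ω => X₀ ω + X ω := hX₀.add hX
  have h0 : 0 ≤ cdfOf μ X₀ y - cdfOf μ X₀ x := sub_nonneg.2 (cdfOf_mono μ X₀ hxy.le)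
  have hp : 0 ≤ CF * (y - x) ^ γ := mul_nonneg hCF (Real.rpow_nonneg (sub_pos.2 hxy).le _)
  rw [abs_sub_comm, abs_sub_comm x, abs_sub_comm (cdfOf μ X₀ x), abs_of_pos (sub_pos.2 hxy),
    abs_of_nonneg h0, abs_of_nonneg (sub_nonneg.2 (cdfOf_mono μ _ hxy.le)),
    ← ENNReal.ofReal_le_ofReal_iff (add_nonneg hp h0), ENNReal.ofReal_add hp h0,
    ← map_Ioc_eq μ hS, ← map_Ioc_eq μ hX₀, Measure.map_apply hS measurableSet_Ioc,
    Measure.map_apply hX₀ measurableSet_Ioc]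
  refine le_trans ?_ (add_le_add_left
    (measure_add_mem_Ioc_le μ hX hX₀ hindep hγ hCF hF hxy) _)
  refine le_trans (measure_mono_ae ?_) (measure_union_le _ _)
  filter_upwards [hXnonneg] with ω hω h
  rcases le_or_gt (X₀ ω) x with h' | h'
  · exact Or.inl ⟨h', h⟩
  · exact Or.inr ⟨h', le_trans (le_add_of_nonneg_right hω) h.2⟩

/-- A Hölder bound on a distribution function can be lowered to a smaller exponent, since the
increments are at most `1`. -/
lemma abs_cdfOf_sub_le_of_exponent_le {Ω : Type*} [MeasurableSpace Ω] (μ : Measure Ω)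
    [IsProbabilityMeasure μ] (Z : Ω → ℝ) {α β C x y : ℝ} (hα : 0 < α) (hαβ : α < β)
    (h : |cdfOf μ Z x - cdfOf μ Z y| ≤ C * |x - y| ^ β) :
    |cdfOf μ Z x - cdfOf μ Z y| ≤ max 1 C * |x - y| ^ α := by
  rcases le_or_gt |x - y| 1 with h1 | h1
  · have h2 : |x - y| ^ β ≤ |x - y| ^ α :=
      Real.rpow_le_rpow_of_exponent_ge' (abs_nonneg _) h1 hα.le hαβ.le
    refine h.trans ?_
    gcongr
    exact le_max_right _ _
  · have hb : ∀ z, 0 ≤ cdfOf μ Z z ∧ cdfOf μ Z z ≤ 1 := fun z =>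
      ⟨ENNReal.toReal_nonneg, measureReal_le_one⟩
    have h3 : |cdfOf μ Z x - cdfOf μ Z y| ≤ 1 := by
      rw [abs_le]
      constructor <;> linarith [hb x, hb y]
    exact h3.trans (one_le_mul_of_one_le_of_one_le (le_max_left _ _)
      (Real.one_le_rpow h1.le hα.le))

/-- **Hölder regularity of the CDF of a sum of independent nonnegative random
variables** (Corollary 3.2 of the paper).  If `X` and `X₀` are independent and
nonnegative with CDFs `F ∈ C^{0,γ}((0,∞))` (with Hölder constant `CF`) and
`F₀ ∈ C^{0,γ₀}((0,∞))` (with Hölder constant `CF0`), then the CDF `F̄` of `X₀ + X`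
lies in `C^{0,γ̄}((0,∞))` with `γ̄ = min(γ, γ₀)`, with Hölder constant
`CF + max(1, CF0)` if `γ₀ > γ`, `CF + CF0` if `γ₀ = γ`, and `CF0 + max(1, CF)` if
`γ₀ < γ`. -/
theorem cdf_sum_indep_holder {Ω : Type*} [MeasurableSpace Ω] (μ : Measure Ω)
    [IsProbabilityMeasure μ] (X X₀ : Ω → ℝ) (hX : Measurable X) (hX₀ : Measurable X₀)
    (hindep : IndepFun X X₀ μ)
    (hXnonneg : ∀ᵐ ω ∂μ, 0 ≤ X ω) (hX₀nonneg : ∀ᵐ ω ∂μ, 0 ≤ X₀ ω)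
    (γ γ₀ CF CF0 : ℝ) (hγ0 : 0 < γ) (hγ1 : γ ≤ 1) (hγ₀0 : 0 < γ₀) (hγ₀1 : γ₀ ≤ 1)
    (hCF : 0 ≤ CF) (hCF0 : 0 ≤ CF0)
    (hF : ∀ x ∈ Set.Ioi (0:ℝ), ∀ y ∈ Set.Ioi (0:ℝ),
      |cdfOf μ X x - cdfOf μ X y| ≤ CF * |x - y| ^ γ)
    (hF₀ : ∀ x ∈ Set.Ioi (0:ℝ), ∀ y ∈ Set.Ioi (0:ℝ),
      |cdfOf μ X₀ x - cdfOf μ X₀ y| ≤ CF0 * |x - y| ^ γ₀) :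
    (γ < γ₀ → ∀ x ∈ Set.Ioi (0:ℝ), ∀ y ∈ Set.Ioi (0:ℝ),
      |cdfOf μ (fun ω => X₀ ω + X ω) x - cdfOf μ (fun ω => X₀ ω + X ω) y| ≤
        (CF + max 1 CF0) * |x - y| ^ min γ γ₀) ∧
    (γ₀ = γ → ∀ x ∈ Set.Ioi (0:ℝ), ∀ y ∈ Set.Ioi (0:ℝ),
      |cdfOf μ (fun ω => X₀ ω + X ω) x - cdfOf μ (fun ω => X₀ ω + X ω) y| ≤
        (CF + CF0) * |x - y| ^ min γ γ₀) ∧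
    (γ₀ < γ → ∀ x ∈ Set.Ioi (0:ℝ), ∀ y ∈ Set.Ioi (0:ℝ),
      |cdfOf μ (fun ω => X₀ ω + X ω) x - cdfOf μ (fun ω => X₀ ω + X ω) y| ≤
        (CF0 + max 1 CF) * |x - y| ^ min γ γ₀) := by
  have key := abs_cdfOf_add_sub_le μ hX hX₀ hindep hXnonneg hγ0 hCF hF
  have key' := abs_cdfOf_add_sub_le μ hX₀ hX hindep.symm hX₀nonneg hγ₀0 hCF0 hF₀
  simp only [add_comm (X _) (X₀ _)] at key'
  refine ⟨fun h x hx y hy => ?_, fun h x hx y hy => ?_, fun h x hx y hy => ?_⟩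
  · rw [min_eq_left h.le, add_mul]
    exact (key x y).trans (add_le_add le_rfl
      (abs_cdfOf_sub_le_of_exponent_le μ X₀ hγ0 h (hF₀ x hx y hy)))
  · subst h
    rw [min_self, add_mul]
    exact (key x y).trans (add_le_add le_rfl (hF₀ x hx y hy))
  · rw [min_eq_right h.le, add_mul]
    exact (key' x y).trans (add_le_add le_rfl
      (abs_cdfOf_sub_le_of_exponent_le μ X hγ₀0 h (hF x hx y hy)))
end

section
/- Let X and X₀ be independent non-negative real random variables with cumulative distribution functions F and F₀ respectively, and let F̄ be the cumulative distribution function of X₀ + X. Then for all real numbers 0 < y < x: F̄(x) − F̄(y) ≥ (F(x) − F(y))·Prob[X₀ = 0] + F(0)·(F₀(x) − F₀(y)). -/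
/-!
The increment `F̄(x) − F̄(y)` is the probability of `y < X₀ + X ≤ x`. Almost surely this event
contains `{y < X ≤ x, X₀ = 0}`, where `X₀ + X = X`, and `{X ≤ 0, y < X₀ ≤ x}`, where nonnegativity
of `X` forces `X = 0`. These two are disjoint because `X₀ = 0 < y` on the first, and by
independence their probabilities are the two terms of the lower bound.
-/

open MeasureTheory ProbabilityTheory

theorem cdfOf_sub_cdfOf {Ω : Type*} [MeasurableSpace Ω] (μ : Measure Ω)
    [IsProbabilityMeasure μ] (Z : Ω → ℝ) (hZ : Measurable Z) {x y : ℝ} (hyx : y ≤ x) :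
    cdfOf μ Z x - cdfOf μ Z y = μ.real (Z ⁻¹' Set.Ioc y x) := by
  have h : Z ⁻¹' Set.Ioc y x = {ω | Z ω ≤ x} \ {ω | Z ω ≤ y} := by
    ext ω
    simp [and_comm]
  have hsub : {ω | Z ω ≤ y} ⊆ {ω | Z ω ≤ x} := fun ω hω => le_trans hω hyx
  rw [h, measureReal_sdiff hsub (measurableSet_le hZ measurable_const)]
  rfl

/-- **Two-term lower bound on increments of the convolution of CDFs** (key inequality
in the proof of Corollary 3.3 of the paper).  If `X` and `X₀` are independent
nonnegative random variables with CDFs `F` and `F₀`, and `F̄` is the CDF of `X₀ + X`,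
then for all `0 < y < x`:
`F̄(x) − F̄(y) ≥ (F(x) − F(y))·Prob[X₀ = 0] + F(0)·(F₀(x) − F₀(y))`. -/
theorem cdf_conv_increment_lower_bound {Ω : Type*} [MeasurableSpace Ω] (μ : Measure Ω)
    [IsProbabilityMeasure μ] (X X₀ : Ω → ℝ) (hX : Measurable X) (hX₀ : Measurable X₀)
    (hindep : IndepFun X X₀ μ)
    (hXnonneg : ∀ᵐ ω ∂μ, 0 ≤ X ω) (hX₀nonneg : ∀ᵐ ω ∂μ, 0 ≤ X₀ ω) :
    ∀ x y : ℝ, 0 < y → y < x →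
      (cdfOf μ X x - cdfOf μ X y) * (μ {ω | X₀ ω = 0}).toReal
        + cdfOf μ X 0 * (cdfOf μ X₀ x - cdfOf μ X₀ y) ≤
      cdfOf μ (fun ω => X₀ ω + X ω) x - cdfOf μ (fun ω => X₀ ω + X ω) y := by
  intro x y hy hyx
  rw [cdfOf_sub_cdfOf μ X hX hyx.le, cdfOf_sub_cdfOf μ X₀ hX₀ hyx.le,
    cdfOf_sub_cdfOf μ (fun ω => X₀ ω + X ω) (hX₀.add hX) hyx.le]
  have hA : μ.real (X ⁻¹' Set.Ioc y x ∩ X₀ ⁻¹' {0})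
      = μ.real (X ⁻¹' Set.Ioc y x) * (μ {ω | X₀ ω = 0}).toReal := by
    rw [measureReal_def, hindep.measure_inter_preimage_eq_mul _ _ measurableSet_Ioc
      (measurableSet_singleton 0), ENNReal.toReal_mul]
    rfl
  have hB : μ.real (X ⁻¹' Set.Iic 0 ∩ X₀ ⁻¹' Set.Ioc y x)
      = cdfOf μ X 0 * μ.real (X₀ ⁻¹' Set.Ioc y x) := by
    rw [measureReal_def, hindep.measure_inter_preimage_eq_mul _ _ measurableSet_Iic
      measurableSet_Ioc, ENNReal.toReal_mul]
    rfl
  have hdisj : Disjoint (X ⁻¹' Set.Ioc y x ∩ X₀ ⁻¹' {0})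
      (X ⁻¹' Set.Iic 0 ∩ X₀ ⁻¹' Set.Ioc y x) := by
    rw [Set.disjoint_left]
    rintro ω ⟨-, h0⟩ ⟨-, h1, -⟩
    simp only [Set.mem_preimage, Set.mem_singleton_iff] at h0
    linarith
  rw [← hA, ← hB, ← measureReal_union hdisj
    ((hX measurableSet_Iic).inter (hX₀ measurableSet_Ioc))]
  refine ENNReal.toReal_mono (measure_ne_top _ _) (measure_mono_ae ?_)
  filter_upwards [hXnonneg] with ω hω
  rintro (⟨⟨h1, h2⟩, h0⟩ | ⟨h0, h1, h2⟩)
  · simp only [Set.mem_preimage, Set.mem_singleton_iff] at h0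
    exact ⟨by linarith, by linarith⟩
  · simp only [Set.mem_preimage, Set.mem_Iic] at h0
    exact ⟨by linarith, by linarith⟩
end

section
/- Let X and X₀ be independent non-negative real random variables with cumulative distribution functions F and F₀, with F ∈ C^{0,γ}((0,∞)) and F₀ ∈ C^{0,γ₀}((0,∞)) for some 0 < γ, γ₀ ≤ 1. Assume: (i) F₀ has a discontinuity at 0 (Prob[X₀ = 0] > 0) and F has a discontinuity at 0 (F(0) > 0); (ii) C^{0,γ}((0,∞)) is the smallest Hölder space containing F, i.e. [F]_{C^{0,γ'}((0,∞))} = ∞ for every γ' with γ < γ' ≤ 1; and (iii) similarly [F₀]_{C^{0,γ₀'}((0,∞))} = ∞ for every γ₀' with γ₀ < γ₀' ≤ 1. Then, with γ̄ = min(γ, γ₀), the CDF F̄ of X₀ + X satisfies F̄ ∈ C^{0,γ̄}((0,∞)) and [F̄]_{C^{0,γ''}((0,∞))} = ∞ for every γ'' with γ̄ < γ'' ≤ 1; that is, C^{0,γ̄}((0,∞)) is the smallest Hölder space containing F̄. -/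
/-!
For `0 < x < y` every increment `F(y) - F(x)` of a CDF is the probability of `{x < Z ≤ y}`, and
all estimates are made on such events.

*Upper bound.* Almost surely, `x < X₀ + X ≤ y` forces either `X₀ < x` or `x ≤ X₀ ≤ y`. On the first
event, conditioning on `X₀ = u < x` leaves the increment of `F` over `(x - u, y - u] ⊆ (0, ∞)`,
which is at most `C (y - x) ^ γ`. The second event is controlled by the Hölder bound on `F₀` over
a slightly longer interval `(z, y]` with `0 < z < x` (`cdf_add_increment_le`). Increments of length
at most `1` then satisfy the bound with exponent `min γ γ₀`; longer ones are trivially at most `1`.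

*Sharpness.* On `{X₀ = 0}` the sum equals `X`, so by independence
`P(X₀ = 0) * P(x < X ≤ y) ≤ P(x < X₀ + X ≤ y)`. As `P(X₀ = 0) > 0`, any Hölder bound for the CDF of
the sum passes to `F` (`inHolderSpace_cdf_of_add`), and by symmetry to `F₀`. An exponent above
`min γ γ₀` thus contradicts the sharpness of `γ` or of `γ₀`.
-/

open MeasureTheory ProbabilityTheory

/-- `u` belongs to the Hölder space `C^{0,γ}(U)`, i.e. its `γ`-Hölder seminorm on `U`
is finite: there is a constant `C` with `|u x − u y| ≤ C |x − y|^γ` on `U`. -/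
def InHolderSpace (u : ℝ → ℝ) (U : Set ℝ) (γ : ℝ) : Prop :=
  ∃ C : ℝ, ∀ x ∈ U, ∀ y ∈ U, |u x - u y| ≤ C * |x - y| ^ γ

lemma cdfOf_sub {Ω : Type*} [MeasurableSpace Ω] (μ : Measure Ω) [IsProbabilityMeasure μ]
    {Z : Ω → ℝ} (hZ : Measurable Z) {x y : ℝ} (hxy : x ≤ y) :
    cdfOf μ Z y - cdfOf μ Z x = μ.real {ω | x < Z ω ∧ Z ω ≤ y} := by
  have h : {ω | x < Z ω ∧ Z ω ≤ y} = {ω | Z ω ≤ y} \ {ω | Z ω ≤ x} := by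
    ext ω
    simp only [Set.mem_ofPred_eq, Set.mem_sdiff, not_le]
    tauto
  have hsub : {ω | Z ω ≤ x} ⊆ {ω | Z ω ≤ y} := fun ω (hω : Z ω ≤ x) => hω.trans hxy
  rw [h, measureReal_sdiff hsub (measurableSet_le hZ measurable_const)]
  rfl

lemma cdfOf_increment_le {Ω : Type*} [MeasurableSpace Ω] (μ : Measure Ω) [IsProbabilityMeasure μ]
    {Z : Ω → ℝ} (hZ : Measurable Z) {C γ : ℝ}
    (hC : ∀ x ∈ Set.Ioi (0 : ℝ), ∀ y ∈ Set.Ioi (0 : ℝ),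
      |cdfOf μ Z x - cdfOf μ Z y| ≤ C * |x - y| ^ γ)
    {x y : ℝ} (hx : 0 < x) (hxy : x ≤ y) :
    μ.real {ω | x < Z ω ∧ Z ω ≤ y} ≤ C * (y - x) ^ γ := by
  have h := hC y (hx.trans_le hxy) x hx
  rw [abs_of_nonneg (sub_nonneg.2 hxy)] at h
  rw [← cdfOf_sub μ hZ hxy]
  exact (le_abs_self _).trans h

/-- By symmetry, the Hölder condition on a CDF need only be tested on the events `{x < Z ≤ y}`. -/
lemma inHolderSpace_cdfOf {Ω : Type*} [MeasurableSpace Ω] (μ : Measure Ω) [IsProbabilityMeasure μ]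
    {Z : Ω → ℝ} (hZ : Measurable Z) {C γ : ℝ} (hγ : 0 < γ)
    (h : ∀ x y : ℝ, 0 < x → x < y → μ.real {ω | x < Z ω ∧ Z ω ≤ y} ≤ C * (y - x) ^ γ) :
    InHolderSpace (cdfOf μ Z) (Set.Ioi 0) γ := by
  have key : ∀ x y : ℝ, 0 < x → x < y → |cdfOf μ Z y - cdfOf μ Z x| ≤ C * |y - x| ^ γ := by
    intro x y hx hxy
    rw [cdfOf_sub μ hZ hxy.le, abs_of_nonneg measureReal_nonneg, abs_of_pos (sub_pos.2 hxy)]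
    exact h x y hx hxy
  refine ⟨C, fun x hx y hy => ?_⟩
  rcases lt_trichotomy x y with hxy | rfl | hxy
  · rw [abs_sub_comm, abs_sub_comm x y]
    exact key x y hx hxy
  · simp [Real.zero_rpow hγ.ne']
  · exact key y x hy hxy

/-- An atom of `X₀` at `0` transfers Hölder bounds from the CDF of the sum to the CDF of `X`:
on `{X₀ = 0}` the sum coincides with `X`. -/
lemma inHolderSpace_cdf_of_add {Ω : Type*} [MeasurableSpace Ω] (μ : Measure Ω)
    [IsProbabilityMeasure μ] {X X₀ : Ω → ℝ} (hX : Measurable X) (hX₀ : Measurable X₀)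
    (hindep : IndepFun X X₀ μ) (hp : 0 < μ.real {ω | X₀ ω = 0}) {γ : ℝ} (hγ : 0 < γ)
    (h : InHolderSpace (cdfOf μ (fun ω => X₀ ω + X ω)) (Set.Ioi 0) γ) :
    InHolderSpace (cdfOf μ X) (Set.Ioi 0) γ := by
  obtain ⟨C, hC⟩ := h
  refine inHolderSpace_cdfOf μ hX (C := C / μ.real {ω | X₀ ω = 0}) hγ fun x y hx hxy => ?_
  have h1 := cdfOf_increment_le μ (hX₀.add hX) hC hx hxy.le
  have h2 : μ.real {ω | x < X ω ∧ X ω ≤ y} * μ.real {ω | X₀ ω = 0}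
      = μ.real ({ω | x < X ω ∧ X ω ≤ y} ∩ {ω | X₀ ω = 0}) := by
    simp only [measureReal_def, ← ENNReal.toReal_mul]
    exact congrArg ENNReal.toReal (hindep.measure_inter_preimage_eq_mul (Set.Ioc x y) {0}
      measurableSet_Ioc (measurableSet_singleton 0)).symm
  have h3 : μ.real ({ω | x < X ω ∧ X ω ≤ y} ∩ {ω | X₀ ω = 0})
      ≤ μ.real {ω | x < X₀ ω + X ω ∧ X₀ ω + X ω ≤ y} := by
    refine measureReal_mono ?_
    rintro ω ⟨hω, h0 : X₀ ω = 0⟩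
    simpa [h0] using hω
  rw [div_mul_eq_mul_div, le_div_iff₀ hp, h2]
  exact h3.trans h1

/-- Conditioning on `X₀ = u < x`, the sum lies in `(x, y]` exactly when `X` lies in
`(x - u, y - u]`, an interval contained in `(0, ∞)` where the Hölder bound on `F` applies. -/
lemma measureReal_inter_lt_le {Ω : Type*} [MeasurableSpace Ω] (μ : Measure Ω)
    [IsProbabilityMeasure μ] {X X₀ : Ω → ℝ} (hX : Measurable X) (hX₀ : Measurable X₀)
    (hindep : IndepFun X X₀ μ) {x y B : ℝ} (hB : 0 ≤ B)
    (h : ∀ u < x, μ.real {ω | x - u < X ω ∧ X ω ≤ y - u} ≤ B) :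
    μ.real {ω | X₀ ω < x ∧ x < X₀ ω + X ω ∧ X₀ ω + X ω ≤ y} ≤ B := by
  have := Measure.isProbabilityMeasure_map (μ := μ) hX.aemeasurable
  have := Measure.isProbabilityMeasure_map (μ := μ) hX₀.aemeasurable
  set S : Set (ℝ × ℝ) := {p | p.1 < x ∧ x < p.1 + p.2 ∧ p.1 + p.2 ≤ y} with hS
  have hSm : MeasurableSet S := by
    refine (measurableSet_lt measurable_fst measurable_const).inter
      ((measurableSet_lt measurable_const (measurable_fst.add measurable_snd)).inter
        (measurableSet_le (measurable_fst.add measurable_snd) measurable_const))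
  have hlaw := (indepFun_iff_map_prod_eq_prod_map_map hX₀.aemeasurable hX.aemeasurable).1
    hindep.symm
  have hslice : ∀ u, μ.map X (Prod.mk u ⁻¹' S) ≤ ENNReal.ofReal B := by
    intro u
    rw [Measure.map_apply hX (measurable_prodMk_left hSm)]
    by_cases hu : u < x
    · refine (measure_mono ?_).trans ((ENNReal.le_ofReal_iff_toReal_le
        (measure_ne_top μ _) hB).2 (h u hu))
      rintro ω ⟨-, h1, h2⟩
      exact ⟨sub_lt_iff_lt_add'.2 h1, le_sub_iff_add_le'.2 h2⟩
    · have : X ⁻¹' (Prod.mk u ⁻¹' S) = ∅ := by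
        ext ω
        simp [hS, hu]
      simp [this]
  have hmain : μ {ω | X₀ ω < x ∧ x < X₀ ω + X ω ∧ X₀ ω + X ω ≤ y} ≤ ENNReal.ofReal B :=
    calc μ {ω | X₀ ω < x ∧ x < X₀ ω + X ω ∧ X₀ ω + X ω ≤ y}
        = μ.map (fun ω => (X₀ ω, X ω)) S := (Measure.map_apply (hX₀.prodMk hX) hSm).symm
      _ = ∫⁻ u, μ.map X (Prod.mk u ⁻¹' S) ∂(μ.map X₀) := by
        rw [hlaw, Measure.prod_apply hSm]
      _ ≤ ∫⁻ _, ENNReal.ofReal B ∂(μ.map X₀) := lintegral_mono hslice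
      _ = ENNReal.ofReal B := by simp
  exact ENNReal.toReal_le_of_le_ofReal hB hmain

/-- The event `{x < X₀ + X ≤ y}` is split according to whether `X₀ < x` or `x ≤ X₀ ≤ y`. -/
lemma cdf_add_increment_le {Ω : Type*} [MeasurableSpace Ω] (μ : Measure Ω)
    [IsProbabilityMeasure μ] {X X₀ : Ω → ℝ} (hX : Measurable X) (hX₀ : Measurable X₀)
    (hindep : IndepFun X X₀ μ) (hXnonneg : ∀ᵐ ω ∂μ, 0 ≤ X ω) {C C₀ γ γ₀ : ℝ}
    (hγ₀ : 0 < γ₀) (hC0 : 0 ≤ C) (hC₀0 : 0 ≤ C₀)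
    (hC : ∀ x ∈ Set.Ioi (0 : ℝ), ∀ y ∈ Set.Ioi (0 : ℝ),
      |cdfOf μ X x - cdfOf μ X y| ≤ C * |x - y| ^ γ)
    (hC₀ : ∀ x ∈ Set.Ioi (0 : ℝ), ∀ y ∈ Set.Ioi (0 : ℝ),
      |cdfOf μ X₀ x - cdfOf μ X₀ y| ≤ C₀ * |x - y| ^ γ₀)
    {x y : ℝ} (hx : 0 < x) (hxy : x < y) :
    μ.real {ω | x < X₀ ω + X ω ∧ X₀ ω + X ω ≤ y}
      ≤ C * (y - x) ^ γ + C₀ * (2 * (y - x)) ^ γ₀ := by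
  have hd : 0 < y - x := sub_pos.2 hxy
  have h1 : μ.real {ω | X₀ ω < x ∧ x < X₀ ω + X ω ∧ X₀ ω + X ω ≤ y} ≤ C * (y - x) ^ γ := by
    refine measureReal_inter_lt_le μ hX hX₀ hindep (by positivity) fun u hu => ?_
    have := cdfOf_increment_le μ hX hC (x := x - u) (y := y - u) (by linarith) (by linarith)
    rwa [sub_sub_sub_cancel_right] at this
  -- `{x ≤ X₀ ≤ y}` contains its left endpoint, so it is enlarged to `{z < X₀ ≤ y}` with `z < x`
  -- chosen so that `0 < z` and `y - z ≤ 2 (y - x)`.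
  obtain ⟨z, hz0, hzx, hz⟩ : ∃ z, 0 < z ∧ z < x ∧ y - z ≤ 2 * (y - x) := by
    refine ⟨max (x / 2) (x - (y - x)), lt_max_of_lt_left (by linarith),
      max_lt (by linarith) (by linarith), ?_⟩
    linarith [le_max_right (x / 2) (x - (y - x))]
  have h2 : μ.real {ω | z < X₀ ω ∧ X₀ ω ≤ y} ≤ C₀ * (2 * (y - x)) ^ γ₀ := by
    refine (cdfOf_increment_le μ hX₀ hC₀ hz0 (by linarith)).trans ?_
    exact mul_le_mul_of_nonneg_left (Real.rpow_le_rpow (by linarith) hz hγ₀.le) hC₀0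
  have h3 : μ.real {ω | x < X₀ ω + X ω ∧ X₀ ω + X ω ≤ y}
      ≤ μ.real ({ω | X₀ ω < x ∧ x < X₀ ω + X ω ∧ X₀ ω + X ω ≤ y} ∪
        {ω | z < X₀ ω ∧ X₀ ω ≤ y}) := by
    refine ENNReal.toReal_mono (measure_ne_top μ _) (measure_mono_ae ?_)
    filter_upwards [hXnonneg] with ω hω h
    rcases lt_or_ge (X₀ ω) x with hlt | hge
    · exact Or.inl ⟨hlt, h⟩
    · exact Or.inr ⟨hzx.trans_le hge, by linarith [h.2]⟩
  exact h3.trans ((measureReal_union_le _ _).trans (add_le_add h1 h2))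

/-- The constant in a Hölder bound can be taken nonnegative. -/
lemma InHolderSpace.exists_nonneg {u : ℝ → ℝ} {U : Set ℝ} {γ : ℝ} (h : InHolderSpace u U γ) :
    ∃ C : ℝ, 0 ≤ C ∧ ∀ x ∈ U, ∀ y ∈ U, |u x - u y| ≤ C * |x - y| ^ γ := by
  obtain ⟨C, hC⟩ := h
  refine ⟨|C|, abs_nonneg C, fun x hx y hy => (hC x hx y hy).trans ?_⟩
  exact mul_le_mul_of_nonneg_right (le_abs_self C) (by positivity)

/-- **Sharpness of the Hölder exponent of a convolution of CDFs** (Corollary 3.3 of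
the paper).  Let `X, X₀` be independent nonnegative random variables whose CDFs `F, F₀`
both have a jump at `0`, with `C^{0,γ}((0,∞))` and `C^{0,γ₀}((0,∞))` the smallest
Hölder spaces containing `F` and `F₀` respectively.  Then, with `γ̄ = min(γ,γ₀)`, the
space `C^{0,γ̄}((0,∞))` is the smallest Hölder space containing the CDF `F̄` of
`X₀ + X`: `F̄ ∈ C^{0,γ̄}((0,∞))` and `[F̄]_{C^{0,γ''}((0,∞))} = ∞` whenever
`γ̄ < γ'' ≤ 1`. -/
theorem cdf_conv_smallest_holder_space {Ω : Type*} [MeasurableSpace Ω] (μ : Measure Ω)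
    [IsProbabilityMeasure μ] (X X₀ : Ω → ℝ) (hX : Measurable X) (hX₀ : Measurable X₀)
    (hindep : IndepFun X X₀ μ)
    (hXnonneg : ∀ᵐ ω ∂μ, 0 ≤ X ω) (hX₀nonneg : ∀ᵐ ω ∂μ, 0 ≤ X₀ ω)
    (γ γ₀ : ℝ) (hγ0 : 0 < γ) (hγ1 : γ ≤ 1) (hγ₀0 : 0 < γ₀) (hγ₀1 : γ₀ ≤ 1)
    (hF : InHolderSpace (cdfOf μ X) (Set.Ioi 0) γ)
    (hF₀ : InHolderSpace (cdfOf μ X₀) (Set.Ioi 0) γ₀)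
    (hjump₀ : 0 < (μ {ω | X₀ ω = 0}).toReal)
    (hjump : 0 < cdfOf μ X 0)
    (hFsharp : ∀ γ' : ℝ, γ < γ' → γ' ≤ 1 → ¬ InHolderSpace (cdfOf μ X) (Set.Ioi 0) γ')
    (hF₀sharp : ∀ γ₀' : ℝ, γ₀ < γ₀' → γ₀' ≤ 1 → ¬ InHolderSpace (cdfOf μ X₀) (Set.Ioi 0) γ₀') :
    InHolderSpace (cdfOf μ (fun ω => X₀ ω + X ω)) (Set.Ioi 0) (min γ γ₀) ∧
      ∀ γ'' : ℝ, min γ γ₀ < γ'' → γ'' ≤ 1 →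
        ¬ InHolderSpace (cdfOf μ (fun ω => X₀ ω + X ω)) (Set.Ioi 0) γ'' := by
  have hγm : 0 < min γ γ₀ := lt_min hγ0 hγ₀0
  refine ⟨?_, fun γ'' h_min_lt h_le_one hbar => ?_⟩
  · obtain ⟨C, hC0, hC⟩ := hF.exists_nonneg
    obtain ⟨C₀, hC₀0, hC₀⟩ := hF₀.exists_nonneg
    refine inHolderSpace_cdfOf μ (hX₀.add hX) (C := C + C₀ * 2 ^ γ₀ + 1) hγm
      fun x y hx hxy => ?_
    have hd : 0 < y - x := sub_pos.2 hxy
    have hK : 0 ≤ C + C₀ * 2 ^ γ₀ := by positivity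
    rcases le_total (y - x) 1 with hle | hge
    · have h := cdf_add_increment_le μ hX hX₀ hindep hXnonneg hγ₀0 hC0 hC₀0 hC hC₀ hx hxy
      have e1 : (y - x) ^ γ ≤ (y - x) ^ min γ γ₀ :=
        Real.rpow_le_rpow_of_exponent_ge hd hle (min_le_left _ _)
      have e2 : (y - x) ^ γ₀ ≤ (y - x) ^ min γ γ₀ :=
        Real.rpow_le_rpow_of_exponent_ge hd hle (min_le_right _ _)
      have e3 : 0 ≤ (y - x) ^ min γ γ₀ := by positivity
      calc μ.real {ω | x < X₀ ω + X ω ∧ X₀ ω + X ω ≤ y}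
          ≤ C * (y - x) ^ γ + C₀ * (2 * (y - x)) ^ γ₀ := h
        _ = C * (y - x) ^ γ + C₀ * 2 ^ γ₀ * (y - x) ^ γ₀ := by
          rw [Real.mul_rpow (by norm_num) hd.le, mul_assoc]
        _ ≤ C * (y - x) ^ min γ γ₀ + C₀ * 2 ^ γ₀ * (y - x) ^ min γ γ₀ := by gcongr
        _ ≤ (C + C₀ * 2 ^ γ₀ + 1) * (y - x) ^ min γ γ₀ := by linarith
    · have e : 1 ≤ (y - x) ^ min γ γ₀ := Real.one_le_rpow hge hγm.le
      exact measureReal_le_one.trans (one_le_mul_of_one_le_of_one_le (by linarith) e)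
  · have h_pos : 0 < γ'' := hγm.trans h_min_lt
    have hjumpX : 0 < μ.real {ω | X ω = 0} := by
      have hle : cdfOf μ X 0 ≤ μ.real {ω | X ω = 0} := by
        refine ENNReal.toReal_mono (measure_ne_top μ _) (measure_mono_ae ?_)
        filter_upwards [hXnonneg] with ω hω h
        exact le_antisymm h hω
      exact hjump.trans_le hle
    rcases min_lt_iff.1 h_min_lt with hlt | hlt
    · exact hFsharp γ'' hlt h_le_one
        (inHolderSpace_cdf_of_add μ hX hX₀ hindep hjump₀ h_pos hbar)
    · have hcomm : (fun ω => X₀ ω + X ω) = fun ω => X ω + X₀ ω := funext fun ω => add_comm _ _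
      rw [hcomm] at hbar
      exact hF₀sharp γ'' hlt h_le_one
        (inHolderSpace_cdf_of_add μ hX₀ hX hindep.symm hjumpX h_pos hbar)
end

section
/- Let M ≥ 1, let ν ≥ 0 and h > 0 satisfy h·ν < 1, let 0 ≤ λ ≤ 1, and let 1 ≤ k ≤ M − 1. Define the (M+1)×(M+1) real matrix A by A_{jj} = 1 − νh for 0 ≤ j ≤ M, A_{j, j−k+1} = νh·λ and A_{j, j−k} = νh·(1 − λ) for those j with j − k ≥ 0, and all other entries zero. Then the L¹ operator norm of A, namely the maximum over columns of the sum of absolute values of the column's entries, equals 1. -/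
/-!
Since `0 ≤ νh < 1` and `0 ≤ λ ≤ 1`, every entry of `A` is nonnegative, so a column sum of absolute
values is the plain column sum, which splits into the contributions of the diagonal and of the two
shifted diagonals. Each of these meets a given column at most once, so the column sum is at most
`(1 - νh) + νhλ + νh(1 - λ) = 1` (`sum_ite_le_of_subsingleton`). In column `1` all three are met, in
rows `1`, `k` and `k + 1`; the last exists because `k ≤ M - 1`. Hence the bound is attained there
(`sum_ite_eq_of_iff`).
-/

lemma sum_ite_eq_of_iff {ι : Type*} [Fintype ι] (P : ι → Prop) [DecidablePred P] (c : ℝ)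
    (a : ι) (hP : ∀ i, P i ↔ i = a) : ∑ i, (if P i then c else 0) = c := by
  classical
  simp [hP]

lemma sum_ite_le_of_subsingleton {ι : Type*} [Fintype ι] (P : ι → Prop) [DecidablePred P] (c : ℝ)
    (hc : 0 ≤ c) (hP : ∀ i j, P i → P j → i = j) : ∑ i, (if P i then c else 0) ≤ c := by
  by_cases h : ∃ a, P a
  · obtain ⟨a, ha⟩ := h
    exact (sum_ite_eq_of_iff P c a fun i => ⟨fun hi => hP i a hi ha, fun hi => hi ▸ ha⟩).le
  · push Not at h
    simpa [h] using hc

/-- **Stability of the one-step finite-difference update matrix** (the crucial estimate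
`‖Aⁱ‖₁ = 1` in the proof of Theorem 4.1 of the paper, equation (e:defofAmatrix)).
Let `A` be the `(M+1)×(M+1)` matrix equal to `(1 − νh)·I` plus the shifted block with
entries `νhλ` at positions `(j, j−k+1)` and `νh(1−λ)` at positions `(j, j−k)` for those
rows `j` with `j − k ≥ 0`.  If `h·ν < 1`, `0 ≤ λ ≤ 1` and `1 ≤ k ≤ M − 1`, then the
`L¹` operator norm of `A` — the maximum over columns of the sum of absolute values of
the column's entries — equals `1`. -/
theorem update_matrix_l1_norm (M : ℕ) (hM : 1 ≤ M) (ν h lam : ℝ)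
    (hν : 0 ≤ ν) (hh : 0 < h) (hstab : h * ν < 1) (hlam0 : 0 ≤ lam) (hlam1 : lam ≤ 1)
    (k : ℤ) (hk1 : 1 ≤ k) (hkM : k ≤ (M : ℤ) - 1)
    (A : Matrix (Fin (M + 1)) (Fin (M + 1)) ℝ)
    (hA : ∀ i j : Fin (M + 1), A i j =
      (if (j : ℤ) = (i : ℤ) then 1 - ν * h else 0) +
      (if 0 ≤ (i : ℤ) - k ∧ (j : ℤ) = (i : ℤ) - k + 1 then ν * h * lam else 0) +
      (if 0 ≤ (i : ℤ) - k ∧ (j : ℤ) = (i : ℤ) - k then ν * h * (1 - lam) else 0)) :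
    (Finset.univ.sup' Finset.univ_nonempty
      fun j : Fin (M + 1) => ∑ i : Fin (M + 1), |A i j|) = 1 := by
  have hd : 0 ≤ 1 - ν * h := by linarith [mul_comm ν h]
  have hl : 0 ≤ ν * h * lam := by positivity
  have hr : 0 ≤ ν * h * (1 - lam) := mul_nonneg (by positivity) (by linarith)
  have habs : ∀ i j, |A i j| = A i j := fun i j => by
    refine abs_of_nonneg ?_
    rw [hA]
    refine add_nonneg (add_nonneg ?_ ?_) ?_ <;> split_ifs <;> first | assumption | exact le_rfl
  simp only [habs]
  simp only [hA, Finset.sum_add_distrib]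
  have htot : (1 - ν * h) + ν * h * lam + ν * h * (1 - lam) = 1 := by ring
  apply le_antisymm
  · refine Finset.sup'_le _ _ fun j _ => ?_
    refine le_trans ?_ htot.le
    refine add_le_add (add_le_add ?_ ?_) ?_
    · exact sum_ite_le_of_subsingleton _ _ hd fun a b ha hb => by ext; omega
    · exact sum_ite_le_of_subsingleton _ _ hl fun a b ha hb => by ext; omega
    · exact sum_ite_le_of_subsingleton _ _ hr fun a b ha hb => by ext; omega
  · lift k to ℕ using by omega
    refine Finset.le_sup'_of_le _ (b := ⟨1, by omega⟩) (Finset.mem_univ _) (le_of_eq ?_)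
    refine htot.symm.trans (Eq.symm ?_)
    refine congrArg₂ (· + ·) (congrArg₂ (· + ·) ?_ ?_) ?_
    · exact sum_ite_eq_of_iff _ _ ⟨1, by omega⟩ fun i => by
        simp only [Fin.ext_iff]; omega
    · exact sum_ite_eq_of_iff _ _ ⟨k, by omega⟩ fun i => by
        simp only [Fin.ext_iff]; omega
    · exact sum_ite_eq_of_iff _ _ ⟨k + 1, by omega⟩ fun i => by
        simp only [Fin.ext_iff]; omega
end

section
/- Let h > 0, let b : [0,∞) → [0,∞) be differentiable and nondecreasing, and let u₀ : ℝ → ℝ be bounded and measurable. Define u(x,t) = Σ_{k=0}^∞ u₀(x − h·k) · e^{−b(t)/h} · (b(t)/h)^k / k!, i.e. u(x,t) = E[u₀(x − h·N_t)] where N_t is a Poisson random variable with mean b(t)/h. Then u(x,0) = E[u₀(x − h·N₀)] with N₀ Poisson of mean b(0)/h, and for every fixed x ∈ ℝ the function t ↦ u(x,t) is differentiable with ∂u/∂t(x,t) = −(b'(t)/h)·(u(x,t) − u(x − h, t)). -/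
/-!
Write `m = b(t)/h` and `a k = u₀(x − h k)`. Then `u(x,t) = e^{−m} F_a(m)`, where
`F_a(m) = ∑ a k m^k / k!` is the exponential generating function of the bounded sequence `a`.
Differentiating an exponential generating function shifts its coefficients: `F_a' = F_{a(· + 1)}`
(`hasDerivAt_egf`), and the shift of `a` is the sequence belonging to `x − h`. Hence
`d/dm (e^{−m} F_a(m)) = −(u(x,t) − u(x − h,t))`, and the chain rule contributes `b'(t)/h`.
-/

/-- `u(x,t) = E[u₀(x − h·N_t)]` where `N_t` is Poisson with mean `b(t)/h`:
`u(x,t) = Σ_{k=0}^∞ u₀(x − h·k) · e^{−b(t)/h} · (b(t)/h)^k / k!`. -/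
noncomputable def poissonTransport (u₀ b : ℝ → ℝ) (h x t : ℝ) : ℝ :=
  ∑' k : ℕ, u₀ (x - h * k) * Real.exp (-(b t / h)) * (b t / h) ^ k / k.factorial

lemma summable_egf (a : ℕ → ℝ) (C : ℝ) (ha : ∀ k, |a k| ≤ C) (y : ℝ) :
    Summable fun k : ℕ => a k * (y ^ k / k.factorial) := by
  refine Summable.of_norm_bounded ((Real.summable_pow_div_factorial |y|).mul_left C) fun k => ?_
  rw [Real.norm_eq_abs, abs_mul, abs_div, abs_pow, Nat.abs_cast]
  exact mul_le_mul_of_nonneg_right (ha k) (by positivity)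

lemma succ_mul_pow_div_factorial (k : ℕ) (y : ℝ) :
    ((k + 1 : ℕ) : ℝ) * y ^ (k + 1 - 1) / (k + 1).factorial = y ^ k / k.factorial := by
  rw [Nat.factorial_succ, Nat.cast_mul, Nat.add_sub_cancel]
  exact mul_div_mul_left _ _ (by positivity)

/-- Differentiating the exponential generating function of a bounded sequence shifts the
sequence. The term-by-term differentiation is justified on the ball of radius `|y| + 1`, where the
differentiated terms are dominated by those of `C * exp (|y| + 1)`. -/
lemma hasDerivAt_egf (a : ℕ → ℝ) (C : ℝ) (ha : ∀ k, |a k| ≤ C) (y : ℝ) :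
    HasDerivAt (fun z => ∑' k : ℕ, a k * (z ^ k / k.factorial))
      (∑' k : ℕ, a (k + 1) * (y ^ k / k.factorial)) y := by
  set R : ℝ := |y| + 1
  have hu : Summable fun k : ℕ => C * ((k : ℝ) * R ^ (k - 1) / k.factorial) := by
    refine Summable.mul_left C ((summable_nat_add_iff 1).1 ?_)
    simp_rw [succ_mul_pow_div_factorial]
    exact Real.summable_pow_div_factorial R
  have hbound : ∀ (k : ℕ) (z : ℝ), z ∈ Metric.ball (0 : ℝ) R →
      ‖a k * ((k : ℝ) * z ^ (k - 1) / k.factorial)‖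
        ≤ C * ((k : ℝ) * R ^ (k - 1) / k.factorial) := by
    intro k z hz
    have hz' : |z| ≤ R := by simpa using (Metric.mem_ball.1 hz).le
    rw [Real.norm_eq_abs, abs_mul, abs_div, abs_mul, abs_pow, Nat.abs_cast, Nat.abs_cast]
    have hC : 0 ≤ C := (abs_nonneg _).trans (ha k)
    gcongr
    exact ha k
  have hy : y ∈ Metric.ball (0 : ℝ) R := by simp [R]
  have key := hasDerivAt_tsum_of_isPreconnected (y₀ := y) (y := y) hu Metric.isOpen_ball
    (convex_ball (0 : ℝ) R).isPreconnected
    (fun k z _ => ((hasDerivAt_pow k z).div_const (k.factorial : ℝ)).const_mul (a k))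
    hbound hy (summable_egf a C ha y) hy
  have hs : Summable fun k : ℕ => a k * ((k : ℝ) * y ^ (k - 1) / k.factorial) :=
    Summable.of_norm_bounded hu fun k => hbound k y hy
  rw [hs.tsum_eq_zero_add] at key
  simpa only [succ_mul_pow_div_factorial, Nat.cast_zero, zero_mul, zero_div, mul_zero, zero_add]
    using key

lemma poissonTransport_eq_exp_mul (u₀ b : ℝ → ℝ) (h x t : ℝ) :
    poissonTransport u₀ b h x t = Real.exp (-(b t / h)) *
      ∑' k : ℕ, u₀ (x - h * k) * ((b t / h) ^ k / k.factorial) := by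
  rw [poissonTransport, ← tsum_mul_left]
  exact tsum_congr fun k => by ring

/-- **The Poisson convolution solves the discretized transport equation** (Remark 4
after Theorem 2.1 of the paper).  Let `h > 0`, let `b : [0,∞) → [0,∞)` be
differentiable (with derivative `b'`) and nondecreasing, and `u₀` bounded and
measurable.  Then `u(x,0) = E[u₀(x − h·N₀)]` with `N₀` Poisson of mean `b(0)/h`, and
for every fixed `x` the map `t ↦ u(x,t)` is differentiable on `[0,∞)` with
`∂u/∂t(x,t) = −(b'(t)/h)·(u(x,t) − u(x − h, t))`. -/
theorem poissonTransport_solves_discrete_transport (h : ℝ) (hh : 0 < h)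
    (b b' : ℝ → ℝ) (hb_nonneg : ∀ t, 0 ≤ t → 0 ≤ b t)
    (hb_mono : MonotoneOn b (Set.Ici 0))
    (hb_deriv : ∀ t, 0 ≤ t → HasDerivWithinAt b (b' t) (Set.Ici 0) t)
    (u₀ : ℝ → ℝ) (hu₀_meas : Measurable u₀) (hu₀_bdd : ∃ C, ∀ x, |u₀ x| ≤ C)
    (x : ℝ) :
    poissonTransport u₀ b h x 0 =
      ∑' k : ℕ, u₀ (x - h * k) * Real.exp (-(b 0 / h)) * (b 0 / h) ^ k / k.factorial ∧
    ∀ t : ℝ, 0 ≤ t →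
      HasDerivWithinAt (fun τ => poissonTransport u₀ b h x τ)
        (-(b' t / h) * (poissonTransport u₀ b h x t - poissonTransport u₀ b h (x - h) t))
        (Set.Ici 0) t := by
  refine ⟨rfl, fun t ht => ?_⟩
  obtain ⟨C, hC⟩ := hu₀_bdd
  have hm : HasDerivWithinAt (fun τ => b τ / h) (b' t / h) (Set.Ici 0) t :=
    (hb_deriv t ht).div_const h
  have hF := (hasDerivAt_egf (fun k => u₀ (x - h * k)) C (fun k => hC _)
    (b t / h)).comp_hasDerivWithinAt t hm
  have hshift : ∀ k : ℕ, x - h * ((k + 1 : ℕ) : ℝ) = x - h - h * k := fun k => by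
    push_cast
    ring
  simp only [hshift] at hF
  simp only [poissonTransport_eq_exp_mul]
  refine (hm.neg.exp.mul hF).congr_deriv ?_
  simp only [Pi.neg_apply, Function.comp_apply]
  ring
end
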